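/- arXiv:math-ph/0103030 — 2 statements merged into one kernel-verified Lean document; each statement's English description precedes it below -/
import Mathlib

section
/- For all b, b' with 0 < b' < b ≤ π/2 and every real z < 1, one has the strict inequality ξ(b,z) > ξ(b',z); i.e. the regularized Green's function is strictly monotonous across the halflayer: ξ(b,z) > ξ(b',z) whenever |b − π/2| < |b' − π/2|. -/
open Real Filter Topology Asymptotics

/-- The digamma function `ψ = Γ'/Γ`. -/
noncomputable def digamma (x : ℝ) : ℝ := deriv Real.Gamma x / Real.Gamma x

/-- The regularized Green's function `ξ(b,z)` of a point interaction at height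
`b ∈ (0,π)` in the Dirichlet layer `ℝ²×(0,π)`, for energies `z < 1`:
`ξ(b,z) = −(1/π²) Σ_{n≥1} ln√(1 − z/n²)·sin²(n b)
          + (1/(4π²))·[γ + ψ(b/π) + (π/2)·cot b]`. -/
noncomputable def xiLayer (b z : ℝ) : ℝ :=
  -(1 / π ^ 2) *
      ∑' n : ℕ, Real.log (Real.sqrt (1 - z / ((n : ℝ) + 1) ^ 2)) * Real.sin (((n : ℝ) + 1) * b) ^ 2
    + (1 / (4 * π ^ 2)) *
      (Real.eulerMascheroniConstant + digamma (b / π) + (π / 2) * Real.cot b)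


lemma dg_hasDeriv {x : ℝ} (hx : 0 < x) :
    HasDerivAt (fun y => Real.log (Real.Gamma y)) (digamma x) x := by
  have h : DifferentiableAt ℝ Real.Gamma x := by
    apply Real.differentiableAt_Gamma
    intro m hm
    have : (0:ℝ) ≤ m := Nat.cast_nonneg m
    linarith
  exact h.hasDerivAt.log (Real.Gamma_pos_of_pos hx).ne'

lemma dg_add_one {x : ℝ} (hx : 0 < x) : digamma (x + 1) = digamma x + 1 / x := by
  have h1 : HasDerivAt (fun y => Real.log (Real.Gamma (y + 1))) (digamma (x + 1)) x := by
    have := dg_hasDeriv (x := x + 1) (by linarith)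
    exact this.comp_add_const x 1
  have h2 : HasDerivAt (fun y => Real.log (Real.Gamma y) + Real.log y) (digamma x + 1 / x) x := by
    have := (dg_hasDeriv hx).add (Real.hasDerivAt_log hx.ne')
    rw [one_div]
    exact this
  have h3 : (fun y => Real.log (Real.Gamma (y + 1))) =ᶠ[𝓝 x]
      (fun y => Real.log (Real.Gamma y) + Real.log y) := by
    filter_upwards [lt_mem_nhds hx] with y hy
    rw [Real.Gamma_add_one hy.ne', Real.log_mul hy.ne' (Real.Gamma_pos_of_pos hy).ne']
    ring
  exact h1.unique (h2.congr_of_eventuallyEq h3)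

lemma log_Gamma_succ {x : ℝ} (hx : 0 < x) :
    Real.log (Real.Gamma (x + 1)) - Real.log (Real.Gamma x) = Real.log x := by
  rw [Real.Gamma_add_one hx.ne', Real.log_mul hx.ne' (Real.Gamma_pos_of_pos hx).ne']
  ring

lemma dg_le {x : ℝ} (hx : 0 < x) : digamma x ≤ Real.log x := by
  have h := Real.convexOn_log_Gamma.le_slope_of_hasDerivAt (x := x) (y := x + 1)
    (Set.mem_Ioi.2 hx) (Set.mem_Ioi.2 (by linarith)) (by linarith) (dg_hasDeriv hx)
  rw [slope_def_field] at h
  simpa [log_Gamma_succ hx] using h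

lemma le_dg {x : ℝ} (hx : 0 < x) : Real.log x ≤ digamma (x + 1) := by
  have h := Real.convexOn_log_Gamma.slope_le_of_hasDerivAt (x := x) (y := x + 1)
    (Set.mem_Ioi.2 hx) (Set.mem_Ioi.2 (by linarith)) (by linarith)
    (dg_hasDeriv (x := x + 1) (by linarith))
  rw [slope_def_field] at h
  simpa [log_Gamma_succ hx] using h

lemma dg_add_nat {x : ℝ} (hx : 0 < x) (M : ℕ) :
    digamma (x + M) = digamma x + ∑ m ∈ Finset.range M, 1 / (x + m) := by
  induction M with
  | zero => simp
  | succ k ih =>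
    rw [Finset.sum_range_succ, ← add_assoc, ← ih, ← dg_add_one (by positivity)]
    push_cast
    ring_nf

lemma dg_asymp {x : ℝ} (hx : 0 < x) :
    Tendsto (fun M : ℕ => digamma (x + M) - Real.log M) atTop (𝓝 0) := by
  have key : ∀ c : ℝ, Tendsto (fun M : ℕ => Real.log (c / M + 1)) atTop (𝓝 0) := by
    intro c
    have h1 : Tendsto (fun M : ℕ => c / (M:ℝ) + 1) atTop (𝓝 (0 + 1)) :=
      (tendsto_const_div_atTop_nhds_zero_nat c).add tendsto_const_nhds
    have := h1.log (by norm_num)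
    simpa using this
  refine tendsto_of_tendsto_of_tendsto_of_le_of_le' (key (x - 1)) (key x) ?_ ?_
  · filter_upwards [eventually_ge_atTop 1] with M hM
    have hM' : (1:ℝ) ≤ M := by exact_mod_cast hM
    have e : (x - 1) / (M:ℝ) + 1 = (x - 1 + M) / M := by field_simp
    rw [e, Real.log_div (by linarith) (by linarith)]
    have := le_dg (x := x - 1 + M) (by linarith)
    have e2 : x - 1 + M + 1 = x + M := by ring
    rw [e2] at this
    linarith
  · filter_upwards [eventually_ge_atTop 1] with M hM
    have hM' : (1:ℝ) ≤ M := by exact_mod_cast hM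
    have e : x / (M:ℝ) + 1 = (x + M) / M := by field_simp
    rw [e, Real.log_div (by linarith) (by linarith)]
    have := dg_le (x := x + M) (by linarith)
    linarith

lemma dg_sum {x : ℝ} (hx : 0 < x) :
    Tendsto (fun M : ℕ => Real.log M - ∑ m ∈ Finset.range M, 1 / (x + m)) atTop
      (𝓝 (digamma x)) := by
  have := (tendsto_const_nhds (x := digamma x)).sub (dg_asymp hx)
  rw [sub_zero] at this
  refine this.congr fun M => ?_
  rw [dg_add_nat hx]
  ring

lemma dg_refl {x : ℝ} (hx : 0 < x) (hx1 : x < 1) :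
    digamma (1 - x) = digamma x + π * Real.cot (π * x) := by
  have hs : 0 < Real.sin (π * x) :=
    Real.sin_pos_of_pos_of_lt_pi (by positivity) (by nlinarith [Real.pi_pos])
  have h1 : HasDerivAt (fun y => Real.log (Real.Gamma (1 - y))) (-digamma (1 - x)) x := by
    have := dg_hasDeriv (x := 1 - x) (by linarith)
    exact this.comp_const_sub 1 x
  have h2 := (dg_hasDeriv hx).add h1
  have h3 : HasDerivAt (fun y => Real.log π - Real.log (Real.sin (π * y)))
      (-(Real.cos (π * x) * π / Real.sin (π * x))) x := by
    have ha : HasDerivAt (fun y : ℝ => π * y) π x := by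
      simpa using (hasDerivAt_id x).const_mul π
    have := (ha.sin.log hs.ne').const_sub (Real.log π)
    exact this
  have h4 : (fun y => Real.log π - Real.log (Real.sin (π * y))) =ᶠ[𝓝 x]
      ((fun y => Real.log (Real.Gamma y)) + fun y => Real.log (Real.Gamma (1 - y))) := by
    filter_upwards [lt_mem_nhds hx, gt_mem_nhds hx1] with y hy hy1
    have hs : 0 < Real.sin (π * y) :=
      Real.sin_pos_of_pos_of_lt_pi (by positivity) (by nlinarith [Real.pi_pos])
    rw [← Real.log_div Real.pi_pos.ne' hs.ne', ← Real.Gamma_mul_Gamma_one_sub]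
    exact Real.log_mul (Real.Gamma_pos_of_pos hy).ne' (Real.Gamma_pos_of_pos (by linarith)).ne'
  have := h3.unique (h2.congr_of_eventuallyEq h4)
  rw [Real.cot_eq_cos_div_sin]
  have e : Real.cos (π * x) * π / Real.sin (π * x) = π * (Real.cos (π * x) / Real.sin (π * x)) := by
    ring
  linarith

lemma exp_int_two_pi (n : ℤ) : Complex.exp (2 * π * Complex.I * n) = 1 := by
  rw [mul_comm]
  exact Complex.exp_int_mul_two_pi_mul_I n

lemma integral_exp01 {c : ℂ} (hc : c ≠ 0) :
    ∫ x in (0:ℝ)..1, Complex.exp (c * x) = (Complex.exp c - 1) / c := by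
  rw [integral_exp_mul_complex hc]
  simp

lemma cosh_coeff_integral (W : ℂ) (n : ℤ)
    (h1 : W + π * Complex.I * n ≠ 0) (h2 : W - π * Complex.I * n ≠ 0) :
    ∫ x in (0:ℝ)..1, Complex.exp (-(2 * π * Complex.I * n) * x) * Complex.cosh (W * (1 - 2 * x))
      = W * Complex.sinh W / (W ^ 2 + π ^ 2 * n ^ 2) := by
  have e : ∀ x : ℝ, Complex.exp (-(2 * π * Complex.I * n) * x) * Complex.cosh (W * (1 - 2 * x))
      = Complex.exp W / 2 * Complex.exp ((-2 * (W + π * Complex.I * n)) * x)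
        + Complex.exp (-W) / 2 * Complex.exp ((2 * (W - π * Complex.I * n)) * x) := by
    intro x
    rw [Complex.cosh, div_mul_eq_mul_div, div_mul_eq_mul_div, ← Complex.exp_add,
      ← Complex.exp_add, mul_div_assoc', mul_add, ← Complex.exp_add, ← Complex.exp_add, ← add_div]
    ring_nf
  have a1 : (-2 * (W + π * Complex.I * n)) ≠ 0 := mul_ne_zero (by norm_num) h1
  have a2 : (2 * (W - π * Complex.I * n)) ≠ 0 := mul_ne_zero (by norm_num) h2
  simp_rw [e]
  rw [intervalIntegral.integral_add, intervalIntegral.integral_const_mul,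
    intervalIntegral.integral_const_mul, integral_exp01 a1, integral_exp01 a2]
  · have b1 : Complex.exp (-2 * (W + π * Complex.I * n)) = Complex.exp (-W) * Complex.exp (-W) := by
      have : -2 * (W + π * Complex.I * n) = -W + -W + 2 * π * Complex.I * ((-n : ℤ) : ℂ) := by
        push_cast; ring
      rw [this, Complex.exp_add, exp_int_two_pi, mul_one, Complex.exp_add]
    have b2 : Complex.exp (2 * (W - π * Complex.I * n)) = Complex.exp W * Complex.exp W := by
      have : 2 * (W - π * Complex.I * n) = W + W + 2 * π * Complex.I * ((-n : ℤ) : ℂ) := by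
        push_cast; ring
      rw [this, Complex.exp_add, exp_int_two_pi, mul_one, Complex.exp_add]
    have b3 : Complex.exp W * Complex.exp (-W) = 1 := by
      rw [← Complex.exp_add]; simp
    have b4 : W ^ 2 + π ^ 2 * n ^ 2 = (W + π * Complex.I * n) * (W - π * Complex.I * n) := by
      have := Complex.I_sq
      linear_combination ((π:ℂ) ^ 2 * n ^ 2) * this
    rw [b1, b2, b4, Complex.sinh]
    generalize Complex.exp W = E at *
    generalize Complex.exp (-W) = F at *
    have c1 : E / 2 * ((F * F - 1) / (-2 * (W + π * Complex.I * n)))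
        = (E - F) / 4 / (W + π * Complex.I * n) := by
      field_simp
      linear_combination (-4 * F) * b3
    have c2 : F / 2 * ((E * E - 1) / (2 * (W - π * Complex.I * n)))
        = (E - F) / 4 / (W - π * Complex.I * n) := by
      field_simp
      linear_combination (4 * E) * b3
    rw [c1, c2]
    field_simp
    ring
  · apply Continuous.intervalIntegrable
    fun_prop
  · apply Continuous.intervalIntegrable
    fun_prop

lemma sinh_ne {W : ℂ} (hW : Complex.sinh W ≠ 0) (n : ℤ) : W - π * Complex.I * n ≠ 0 := by
  intro h
  apply hW
  have : W = (n * π) * Complex.I := by linear_combination h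
  rw [this, Complex.sinh_mul_I, Complex.sin_int_mul_pi, zero_mul]

lemma summable_coeff (W : ℂ) :
    Summable (fun n : ℤ => W * Complex.sinh W / (W ^ 2 + π ^ 2 * n ^ 2)) := by
  have hb : Summable (fun n : ℤ => 1 / ((n:ℝ)) ^ 2) := by
    exact (Real.summable_one_div_int_pow (p := 2)).2 (by norm_num)
  refine summable_of_isBigO (E := ℂ) (g := fun n : ℤ => 1 / ((n:ℝ)) ^ 2) hb ?_
  refine IsBigO.of_bound (‖W * Complex.sinh W‖) ?_
  have hfin : {n : ℤ | ¬ (‖W‖ ^ 2 + 1 ≤ |(n:ℝ)|)}.Finite := by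
    apply (Set.finite_Icc (-⌈‖W‖ ^ 2 + 1⌉) ⌈‖W‖ ^ 2 + 1⌉).subset
    intro n hn
    simp only [Set.mem_ofPred_eq, not_le] at hn
    have h1 := Int.le_ceil (‖W‖ ^ 2 + 1)
    have h2 := abs_lt.1 hn
    constructor
    · have : ((-⌈‖W‖ ^ 2 + 1⌉ : ℤ) : ℝ) ≤ n := by push_cast; linarith
      exact_mod_cast this
    · have : (n:ℝ) ≤ ((⌈‖W‖ ^ 2 + 1⌉ : ℤ) : ℝ) := by linarith
      exact_mod_cast this
  have hev : ∀ᶠ n : ℤ in cofinite, ‖W‖ ^ 2 + 1 ≤ |(n:ℝ)| := hfin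
  filter_upwards [hev] with n hn
  rw [norm_div, div_eq_mul_one_div]
  refine mul_le_mul_of_nonneg_left ?_ (norm_nonneg _)
  have hn0 : (1:ℝ) ≤ |(n:ℝ)| := by nlinarith [sq_nonneg ‖W‖]
  have hn1 : |(n:ℝ)| ≤ (n:ℝ) ^ 2 := by rw [← sq_abs]; nlinarith
  have hlow : (n:ℝ) ^ 2 ≤ ‖W ^ 2 + π ^ 2 * n ^ 2‖ := by
    have h1 := norm_sub_norm_le ((π:ℂ) ^ 2 * n ^ 2) (-W ^ 2)
    have h2 : ‖(π:ℂ) ^ 2 * n ^ 2‖ = π ^ 2 * (n:ℝ) ^ 2 := by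
      rw [norm_mul, norm_pow, norm_pow, Complex.norm_real, Complex.norm_intCast]
      simp [abs_of_pos Real.pi_pos]
    have h3 : ‖-W ^ 2‖ = ‖W‖ ^ 2 := by simp
    have h4 : (π:ℂ) ^ 2 * n ^ 2 - -W ^ 2 = W ^ 2 + π ^ 2 * n ^ 2 := by ring
    rw [h2, h3, h4] at h1
    have : (9:ℝ) ≤ π ^ 2 := by nlinarith [Real.pi_gt_three]
    nlinarith
  have hsq : ‖1 / (n:ℝ) ^ 2‖ = 1 / (n:ℝ) ^ 2 := by
    rw [Real.norm_of_nonneg (by positivity)]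
  rw [hsq]
  exact one_div_le_one_div_of_le (by nlinarith) hlow

lemma hasSum_cosh {W : ℂ} (hW : Complex.sinh W ≠ 0) {x : ℝ} (hx : x ∈ Set.Ico (0:ℝ) 1) :
    HasSum (fun n : ℤ => W * Complex.sinh W / (W ^ 2 + π ^ 2 * n ^ 2)
        * Complex.exp (2 * π * Complex.I * n * x))
      (Complex.cosh (W * (1 - 2 * x))) := by
  let f : ℝ → ℂ := fun x => Complex.cosh (W * (1 - 2 * x))
  have hcont : Continuous (AddCircle.liftIco (1:ℝ) 0 f) := by
    apply AddCircle.liftIco_zero_continuous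
    · simp only [f]
      rw [← Complex.cosh_neg]
      congr 1
      push_cast
      ring
    · apply Continuous.continuousOn
      simp only [f]
      fun_prop
  let B : C(AddCircle (1:ℝ), ℂ) := ⟨_, hcont⟩
  have hcoeff : ∀ n : ℤ, fourierCoeff B n = W * Complex.sinh W / (W ^ 2 + π ^ 2 * n ^ 2) := by
    intro n
    have h1 : fourierCoeff B n = fourierCoeffOn (lt_add_of_pos_right (0:ℝ) one_pos) f n :=
      fourierCoeff_liftIco_eq f n
    rw [h1, fourierCoeffOn_eq_integral]
    have h3 := sinh_ne hW (-n)
    push_cast at h3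
    rw [← cosh_coeff_integral W n (by intro h; apply h3; linear_combination h) (sinh_ne hW n)]
    simp only [zero_add, sub_zero, div_one, one_smul, smul_eq_mul]
    congr 1
    ext x
    rw [fourier_coe_apply]
    congr 2
    push_cast
    ring
  have hs : Summable (fourierCoeff B) := by
    rw [funext hcoeff]
    exact summable_coeff W
  have h := has_pointwise_sum_fourier_series_of_summable hs (x : AddCircle (1:ℝ))
  have hBx : B (x : AddCircle (1:ℝ)) = Complex.cosh (W * (1 - 2 * x)) :=
    AddCircle.liftIco_zero_coe_apply (f := f) hx
  rw [hBx] at h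
  refine h.congr_fun ?_ 
  intro n
  rw [hcoeff, smul_eq_mul, fourier_coe_apply]
  simp

lemma hasSum_cosh_nat {W : ℂ} (hW : Complex.sinh W ≠ 0) {x : ℝ} (hx : x ∈ Set.Ico (0:ℝ) 1) :
    HasSum (fun n : ℕ => 2 * W * Complex.sinh W / (W ^ 2 + π ^ 2 * ((n:ℂ) + 1) ^ 2)
        * Complex.cos (2 * π * ((n:ℂ) + 1) * x))
      (Complex.cosh (W * (1 - 2 * x)) - W * Complex.sinh W / W ^ 2) := by
  have h := (hasSum_cosh hW hx).nat_add_neg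
  rw [← hasSum_nat_add_iff' 1] at h
  convert! h using 1
  · ext n
    rw [Complex.cos]
    push_cast
    have e1 : 2 * π * ((n:ℂ) + 1) * x * Complex.I = 2 * π * Complex.I * ((n:ℂ) + 1) * x := by ring
    have e2 : -(2 * π * ((n:ℂ) + 1) * x) * Complex.I
      = 2 * π * Complex.I * (-1 + -(n:ℂ)) * x := by ring
    rw [e1, e2]
    ring_nf
  · simp

lemma hasSum_cosh_diff {W : ℂ} (hW : Complex.sinh W ≠ 0) {x y : ℝ} (hx : x ∈ Set.Ico (0:ℝ) 1)
    (hy : y ∈ Set.Ico (0:ℝ) 1) :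
    HasSum (fun n : ℕ => 2 * W * Complex.sinh W / (W ^ 2 + π ^ 2 * ((n:ℂ) + 1) ^ 2)
        * (Complex.cos (2 * π * ((n:ℂ) + 1) * y) - Complex.cos (2 * π * ((n:ℂ) + 1) * x)))
      (Complex.cosh (W * (1 - 2 * y)) - Complex.cosh (W * (1 - 2 * x))) := by
  have := (hasSum_cosh_nat hW hy).sub (hasSum_cosh_nat hW hx)
  convert! this using 1
  · ext n; ring
  · ring

/-- The difference of cosines. -/
noncomputable def dco (b b' : ℝ) (n : ℕ) : ℝ :=
  Real.cos (2 * ((n:ℝ) + 1) * b') - Real.cos (2 * ((n:ℝ) + 1) * b)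

lemma mem_Ico_div_pi {b : ℝ} (h0 : 0 < b) (h1 : b ≤ π / 2) : b / π ∈ Set.Ico (0:ℝ) 1 := by
  have := Real.pi_pos
  refine ⟨by positivity, ?_⟩
  rw [div_lt_one this]; linarith

lemma hasSum_neg {b b' k : ℝ} (hb'0 : 0 < b') (hb'b : b' < b) (hb : b ≤ π / 2) (hk : 0 < k) :
    HasSum (fun n : ℕ => 2 * k / (((n:ℝ) + 1) ^ 2 + k ^ 2) * dco b b' n)
      (π * (Real.cosh (k * (π - 2 * b')) - Real.cosh (k * (π - 2 * b))) / Real.sinh (π * k)) := by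
  have hpi := Real.pi_pos
  have hpc : (π:ℂ) ≠ 0 := by exact_mod_cast hpi.ne'
  have hs : 0 < Real.sinh (π * k) := Real.sinh_pos_iff.2 (by positivity)
  have hW : Complex.sinh ((π * k : ℝ) : ℂ) ≠ 0 := by
    rw [← Complex.ofReal_sinh]; exact_mod_cast hs.ne'
  have h := hasSum_cosh_diff hW (mem_Ico_div_pi (hb'0.trans hb'b) hb)
    (mem_Ico_div_pi hb'0 (hb'b.le.trans hb))
  have h2 : HasSum (fun n : ℕ => 2 * (π * k) * Real.sinh (π * k)
      / ((π * k) ^ 2 + π ^ 2 * ((n:ℝ) + 1) ^ 2) * (Real.cos (2 * π * ((n:ℝ) + 1) * (b' / π))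
        - Real.cos (2 * π * ((n:ℝ) + 1) * (b / π))))
      (Real.cosh (π * k * (1 - 2 * (b' / π))) - Real.cosh (π * k * (1 - 2 * (b / π)))) := by
    rw [← Complex.hasSum_ofReal]
    push_cast at h ⊢
    exact h
  have h3 := h2.mul_left (π / Real.sinh (π * k))
  convert! h3 using 1
  · ext n
    have e : ∀ c : ℝ, 2 * π * ((n:ℝ) + 1) * (c / π) = 2 * ((n:ℝ) + 1) * c := by
      intro c; field_simp
    rw [e, e, dco]
    have : (π * k) ^ 2 + π ^ 2 * ((n:ℝ) + 1) ^ 2 = π ^ 2 * (((n:ℝ) + 1) ^ 2 + k ^ 2) := by ring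
    rw [this]
    have : 0 < ((n:ℝ) + 1) ^ 2 + k ^ 2 := by positivity
    field_simp
  · have e : ∀ c : ℝ, π * k * (1 - 2 * (c / π)) = k * (π - 2 * c) := by
      intro c; field_simp
    rw [e, e]
    ring

lemma hasSum_pos {b b' s : ℝ} (hb'0 : 0 < b') (hb'b : b' < b) (hb : b ≤ π / 2) (hs0 : 0 < s)
    (hs1 : s < 1) :
    HasSum (fun n : ℕ => 1 / (((n:ℝ) + 1) ^ 2 - s ^ 2) * dco b b' n)
      (π * (Real.cos (s * (π - 2 * b)) - Real.cos (s * (π - 2 * b')))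
        / (2 * s * Real.sin (π * s))) := by
  have hpi := Real.pi_pos
  have hpc : (π:ℂ) ≠ 0 := by exact_mod_cast hpi.ne'
  have hs : 0 < Real.sin (π * s) :=
    Real.sin_pos_of_pos_of_lt_pi (by positivity) (by nlinarith)
  have hW : Complex.sinh (((π * s : ℝ) : ℂ) * Complex.I) ≠ 0 := by
    rw [Complex.sinh_mul_I, ← Complex.ofReal_sin]
    exact mul_ne_zero (by exact_mod_cast hs.ne') Complex.I_ne_zero
  have h := hasSum_cosh_diff hW (mem_Ico_div_pi (hb'0.trans hb'b) hb)
    (mem_Ico_div_pi hb'0 (hb'b.le.trans hb))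
  have h2 : HasSum (fun n : ℕ => -(2 * (π * s) * Real.sin (π * s))
      / (-(π * s) ^ 2 + π ^ 2 * ((n:ℝ) + 1) ^ 2) * (Real.cos (2 * π * ((n:ℝ) + 1) * (b' / π))
        - Real.cos (2 * π * ((n:ℝ) + 1) * (b / π))))
      (Real.cos (π * s * (1 - 2 * (b' / π))) - Real.cos (π * s * (1 - 2 * (b / π)))) := by
    rw [← Complex.hasSum_ofReal]
    convert! h using 1
    · ext n
      rw [Complex.sinh_mul_I]
      push_cast
      have i1 := Complex.I_sq
      have e1 : 2 * (π * s * Complex.I) * (Complex.sin (π * s) * Complex.I)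
        = -(2 * (π * s) * Complex.sin (π * s)) := by
        linear_combination (2 * π * s * Complex.sin (π * s)) * i1
      have e2 : (π * s * Complex.I) ^ 2 = -((π:ℂ) * s) ^ 2 := by
        linear_combination ((π:ℂ) * s) ^ 2 * i1
      rw [e1, e2]
    · push_cast
      have e : ∀ c : ℂ, (π:ℂ) * s * Complex.I * c = (π * s * c) * Complex.I := by
        intro c; ring
      rw [e, e, Complex.cosh_mul_I, Complex.cosh_mul_I]
  have h3 := h2.mul_left (-π / (2 * s * Real.sin (π * s)))
  convert! h3 using 1
  · ext n
    have e : ∀ c : ℝ, 2 * π * ((n:ℝ) + 1) * (c / π) = 2 * ((n:ℝ) + 1) * c := by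
      intro c; field_simp
    rw [e, e, dco]
    have : -(π * s) ^ 2 + π ^ 2 * ((n:ℝ) + 1) ^ 2 = π ^ 2 * (((n:ℝ) + 1) ^ 2 - s ^ 2) := by ring
    rw [this]
    have hn : (0:ℝ) ≤ n := Nat.cast_nonneg n
    have : 0 < ((n:ℝ) + 1) ^ 2 - s ^ 2 := by nlinarith
    have hs' := hs.ne'
    generalize Real.sin (π * s) = S at hs' ⊢
    field_simp
  · have e : ∀ c : ℝ, π * s * (1 - 2 * (c / π)) = s * (π - 2 * c) := by
      intro c; field_simp
    rw [e, e]
    ring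

lemma abs_dco_le (b b' : ℝ) (n : ℕ) : |dco b b' n| ≤ 2 := by
  unfold dco
  have h1 := Real.neg_one_le_cos (2 * ((n:ℝ) + 1) * b')
  have h2 := Real.cos_le_one (2 * ((n:ℝ) + 1) * b')
  have h3 := Real.neg_one_le_cos (2 * ((n:ℝ) + 1) * b)
  have h4 := Real.cos_le_one (2 * ((n:ℝ) + 1) * b)
  rw [abs_le]
  constructor <;> linarith

lemma summable_inv_sq : Summable (fun n : ℕ => 1 / ((n:ℝ) + 1) ^ 2) := by
  have h := (Real.summable_one_div_nat_pow (p := 2)).2 (by norm_num)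
  have := (summable_nat_add_iff 1).2 h
  simpa using this

/-- The logarithmic series of the difference. -/
noncomputable def Tser (b b' z : ℝ) : ℝ :=
  ∑' n : ℕ, Real.log (1 - z / ((n:ℝ) + 1) ^ 2) * dco b b' n

lemma Tser_zero (b b' : ℝ) : Tser b b' 0 = 0 := by
  simp [Tser]

lemma sq_sub_bound {r z : ℝ} (hr0 : 0 ≤ r) (hzr : z < r) (n : ℕ) :
    (1 - r) * ((n:ℝ) + 1) ^ 2 ≤ ((n:ℝ) + 1) ^ 2 - z := by
  have hn : (0:ℝ) ≤ n := Nat.cast_nonneg n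
  nlinarith [mul_nonneg hr0 hn, mul_nonneg hr0 (mul_nonneg hn hn)]

lemma Tser_deriv (b b' : ℝ) {z : ℝ} (hz : z < 1) :
    HasDerivAt (Tser b b') (∑' n : ℕ, -(1 / (((n:ℝ) + 1) ^ 2 - z)) * dco b b' n) z := by
  obtain ⟨r, hr0, hr1, hzr⟩ : ∃ r : ℝ, 0 < r ∧ r < 1 ∧ z < r :=
    ⟨max ((z + 1) / 2) (1 / 2), by simp, by
      rw [max_lt_iff]; constructor <;> linarith, by
      rw [lt_max_iff]; left; linarith⟩
  have hbound : ∀ (n : ℕ) (y : ℝ), y < r → (1 - r) * ((n:ℝ) + 1) ^ 2 ≤ ((n:ℝ) + 1) ^ 2 - y :=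
    fun n y hy => sq_sub_bound hr0.le hy n
  have hpos : ∀ n : ℕ, 0 < (1 - r) * ((n:ℝ) + 1) ^ 2 := by
    intro n
    have : 0 < 1 - r := by linarith
    positivity
  refine hasDerivAt_tsum_of_isPreconnected (t := Set.Iio r)
    (u := fun n : ℕ => 2 / (1 - r) * (1 / ((n:ℝ) + 1) ^ 2))
    (g := fun (n : ℕ) (z : ℝ) => Real.log (1 - z / ((n:ℝ) + 1) ^ 2) * dco b b' n)
    (g' := fun (n : ℕ) (z : ℝ) => -(1 / (((n:ℝ) + 1) ^ 2 - z)) * dco b b' n)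
    (y₀ := 0)
    (summable_inv_sq.mul_left _) isOpen_Iio isPreconnected_Iio ?_ ?_ hr0 ?_ hzr
  · intro n y hy
    have h1 := hbound n y hy
    have h2 := hpos n
    have hN : 0 < ((n:ℝ) + 1) ^ 2 := by positivity
    have h3 : 1 - y / ((n:ℝ) + 1) ^ 2 = (((n:ℝ) + 1) ^ 2 - y) / ((n:ℝ) + 1) ^ 2 := by
      field_simp
    have h4 : 0 < (((n:ℝ) + 1) ^ 2 - y) := by linarith
    have h5 : HasDerivAt (fun y : ℝ => 1 - y / ((n:ℝ) + 1) ^ 2) (-(1 / ((n:ℝ) + 1) ^ 2)) y :=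
      ((hasDerivAt_id y).div_const _).const_sub 1
    have h6 := (h5.log (by rw [h3]; positivity)).mul_const (dco b b' n)
    rw [h3] at h6
    have e : -(1 / ((n:ℝ) + 1) ^ 2) / ((((n:ℝ) + 1) ^ 2 - y) / ((n:ℝ) + 1) ^ 2)
        = -(1 / (((n:ℝ) + 1) ^ 2 - y)) := by field_simp
    rw [e] at h6
    exact h6
  · intro n y hy
    have h1 := hbound n y hy
    have h2 := hpos n
    have h4 : 0 < (((n:ℝ) + 1) ^ 2 - y) := by linarith
    rw [Real.norm_eq_abs, abs_mul, abs_neg, abs_of_pos (by positivity)]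
    calc 1 / (((n:ℝ) + 1) ^ 2 - y) * |dco b b' n|
        ≤ 1 / ((1 - r) * ((n:ℝ) + 1) ^ 2) * 2 :=
          mul_le_mul (one_div_le_one_div_of_le h2 h1) (abs_dco_le b b' n) (abs_nonneg _)
            (by positivity)
      _ = 2 / (1 - r) * (1 / ((n:ℝ) + 1) ^ 2) := by
          have : 1 - r ≠ 0 := by linarith
          field_simp
  · simp

/-- The derivative of the series in the momentum variable. -/
noncomputable def Qf (b b' k : ℝ) : ℝ :=
  π * (Real.cosh (k * (π - 2 * b')) - Real.cosh (k * (π - 2 * b))) / Real.sinh (π * k)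

lemma Qf_pos {b b' k : ℝ} (hb'b : b' < b) (hb : b ≤ π / 2) (hk : 0 < k) :
    0 < Qf b b' k := by
  have hs : 0 < Real.sinh (π * k) := Real.sinh_pos_iff.2 (mul_pos Real.pi_pos hk)
  have hc : Real.cosh (k * (π - 2 * b)) < Real.cosh (k * (π - 2 * b')) := by
    rw [Real.cosh_lt_cosh, abs_of_nonneg, abs_of_nonneg]
    · exact mul_lt_mul_of_pos_left (by linarith) hk
    · exact mul_nonneg hk.le (by linarith)
    · exact mul_nonneg hk.le (by linarith)
  unfold Qf
  have := sub_pos.2 hc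
  have := Real.pi_pos
  positivity

lemma Qf_le {b b' k : ℝ} (hb'0 : 0 < b') (hb'b : b' < b) (hb : b ≤ π / 2) (hk : 0 < k) :
    Qf b b' k ≤ π := by
  have hpi := Real.pi_pos
  have hs : 0 < Real.sinh (π * k) := Real.sinh_pos_iff.2 (mul_pos Real.pi_pos hk)
  have hc : Real.cosh (k * (π - 2 * b')) ≤ Real.cosh (π * k) := by
    rw [Real.cosh_le_cosh, abs_of_nonneg, abs_of_nonneg]
    · nlinarith
    · positivity
    · exact mul_nonneg hk.le (by linarith)
  have h1 := Real.one_le_cosh (k * (π - 2 * b))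
  have h2 := Real.cosh_sub_sinh (π * k)
  have h3 : Real.exp (-(π * k)) ≤ 1 := Real.exp_le_one_iff.2 (by nlinarith)
  unfold Qf
  rw [div_le_iff₀ hs]
  apply mul_le_mul_of_nonneg_left _ hpi.le
  linarith

lemma Tser_deriv_neg {b b' k : ℝ} (hb'0 : 0 < b') (hb'b : b' < b) (hb : b ≤ π / 2) (hk : 0 < k) :
    HasDerivAt (Tser b b') (-(1 / (2 * k)) * Qf b b' k) (-k ^ 2) := by
  have h := Tser_deriv b b' (z := -k ^ 2) (by nlinarith)
  have e := (hasSum_neg hb'0 hb'b hb hk).mul_left (-(1 / (2 * k)))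
  rw [Qf, ← e.tsum_eq]
  convert! h using 3 with n
  have : 0 < ((n:ℝ) + 1) ^ 2 + k ^ 2 := by positivity
  rw [sub_neg_eq_add]
  field_simp

lemma Tser_deriv_pos {b b' s : ℝ} (hb'0 : 0 < b') (hb'b : b' < b) (hb : b ≤ π / 2) (hs0 : 0 < s)
    (hs1 : s < 1) : ∃ v, v < 0 ∧ HasDerivAt (Tser b b') v (s ^ 2) := by
  have h := Tser_deriv b b' (z := s ^ 2) (by nlinarith)
  have hpi := Real.pi_pos
  refine ⟨_, ?_, h⟩
  simp_rw [neg_mul]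
  rw [tsum_neg, (hasSum_pos hb'0 hb'b hb hs0 hs1).tsum_eq, neg_lt_zero]
  have hs : 0 < Real.sin (π * s) :=
    Real.sin_pos_of_pos_of_lt_pi (by positivity) (by nlinarith)
  have hc : Real.cos (s * (π - 2 * b')) < Real.cos (s * (π - 2 * b)) := by
    apply Real.cos_lt_cos_of_nonneg_of_le_pi
    · exact mul_nonneg hs0.le (by linarith)
    · nlinarith
    · exact mul_lt_mul_of_pos_left (by linarith) hs0
  have := sub_pos.2 hc
  positivity

lemma Tser_cont (b b' : ℝ) : ContinuousOn (Tser b b') (Set.Iio 1) :=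
  fun _ hz => (Tser_deriv b b' hz).continuousAt.continuousWithinAt

lemma Tser_anti_neg {b b' : ℝ} (hb'0 : 0 < b') (hb'b : b' < b) (hb : b ≤ π / 2) :
    StrictAntiOn (Tser b b') (Set.Iic 0) := by
  apply strictAntiOn_of_deriv_neg (convex_Iic 0)
  · exact (Tser_cont b b').mono fun z hz => Set.mem_Iio.2 (lt_of_le_of_lt (Set.mem_Iic.1 hz) one_pos)
  · intro z hz
    rw [interior_Iic] at hz
    have hz' : 0 < -z := neg_pos.2 hz
    have hk := Real.sqrt_pos.2 hz'
    have h := Tser_deriv_neg hb'0 hb'b hb hk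
    rw [Real.sq_sqrt hz'.le, neg_neg] at h
    rw [h.deriv]
    have := Qf_pos hb'b hb hk
    rw [neg_mul, neg_lt_zero]
    positivity

lemma Tser_anti_pos {b b' : ℝ} (hb'0 : 0 < b') (hb'b : b' < b) (hb : b ≤ π / 2) :
    StrictAntiOn (Tser b b') (Set.Ico 0 1) := by
  apply strictAntiOn_of_deriv_neg (convex_Ico 0 1)
  · exact (Tser_cont b b').mono fun z hz => hz.2
  · intro z hz
    rw [interior_Ico] at hz
    have hs := Real.sqrt_pos.2 hz.1
    have hs1 : Real.sqrt z < 1 := by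
      rw [Real.sqrt_lt' one_pos]; simpa using hz.2
    obtain ⟨v, hv, h⟩ := Tser_deriv_pos hb'0 hb'b hb hs hs1
    rw [Real.sq_sqrt hz.1.le] at h
    rw [h.deriv]
    exact hv

/-- Image term. -/
noncomputable def Eim (t k : ℝ) : ℝ := Real.exp (-2 * k * t) / (2 * t)

lemma Eim_deriv {t : ℝ} (ht : 0 < t) (k : ℝ) :
    HasDerivAt (Eim t) (-Real.exp (-2 * k * t)) k := by
  have h1 : HasDerivAt (fun k : ℝ => -2 * k * t) (-2 * t) k := by
    simpa using ((hasDerivAt_id k).const_mul (-2)).mul_const t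
  have h2 := h1.exp.div_const (2 * t)
  have e : Real.exp (-2 * k * t) * (-2 * t) / (2 * t) = -Real.exp (-2 * k * t) := by
    field_simp
  rw [e] at h2
  exact h2

lemma Eim_tendsto {t : ℝ} (ht : 0 < t) : Tendsto (Eim t) atTop (𝓝 0) := by
  have h1 : Tendsto (fun k : ℝ => -2 * k * t) atTop atBot := by
    have := (tendsto_id (α := ℝ) (x := atTop)).const_mul_atTop_of_neg (r := -2 * t) (by linarith)
    refine this.congr fun k => ?_
    simp only [id]; ring
  have := (Real.tendsto_exp_atBot.comp h1).div_const (2 * t)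
  rw [zero_div] at this
  exact this

/-- Truncated image sum. -/
noncomputable def Fim (b b' : ℝ) (M : ℕ) (k : ℝ) : ℝ :=
  -π * ∑ m ∈ Finset.range M, (Eim (m * π + b') k + Eim (m * π + (π - b')) k
    - Eim (m * π + b) k - Eim (m * π + (π - b)) k)

lemma Fim_tendsto {b b' : ℝ} (hb'0 : 0 < b') (hb'b : b' < b) (hb : b ≤ π / 2) (M : ℕ) :
    Tendsto (Fim b b' M) atTop (𝓝 0) := by
  have hpi := Real.pi_pos
  have : Tendsto (Fim b b' M) atTop
      (𝓝 (-π * ∑ m ∈ Finset.range M, ((0:ℝ) + 0 - 0 - 0))) := by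
    apply Tendsto.const_mul
    apply tendsto_finsetSum
    intro m _
    have hm : 0 ≤ (m:ℝ) * π := by positivity
    exact (((Eim_tendsto (by linarith)).add (Eim_tendsto (by linarith))).sub
      (Eim_tendsto (by linarith))).sub (Eim_tendsto (by linarith))
  simpa using this

lemma Fim_deriv {b b' k : ℝ} (hb'0 : 0 < b') (hb'b : b' < b) (hb : b ≤ π / 2) (M : ℕ)
    (hk : 0 < k) :
    HasDerivAt (Fim b b' M) ((1 - Real.exp (-2 * π * M * k)) * Qf b b' k) k := by
  have hpi := Real.pi_pos
  have h1 : HasDerivAt (Fim b b' M) (-π * ∑ m ∈ Finset.range M,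
      (-Real.exp (-2 * k * (m * π + b')) + -Real.exp (-2 * k * (m * π + (π - b')))
        - -Real.exp (-2 * k * (m * π + b)) - -Real.exp (-2 * k * (m * π + (π - b))))) k := by
    apply HasDerivAt.const_mul
    apply HasDerivAt.fun_sum
    intro m _
    have hm : 0 ≤ (m:ℝ) * π := by positivity
    exact (((Eim_deriv (by linarith) k).add (Eim_deriv (by linarith) k)).sub
      (Eim_deriv (by linarith) k)).sub (Eim_deriv (by linarith) k)
  convert! h1 using 1
  have hs : 0 < Real.sinh (π * k) := Real.sinh_pos_iff.2 (mul_pos Real.pi_pos hk)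
  have hq : Real.exp (-2 * π * k) < 1 := Real.exp_lt_one_iff.mpr (by nlinarith [mul_pos hpi hk])
  have hcosh : ∀ (c : ℝ) (m : ℕ), Real.exp (-2 * k * (m * π + c))
      + Real.exp (-2 * k * (m * π + (π - c)))
      = Real.exp (-2 * π * k) ^ m * (Real.exp (-(π * k)) * (2 * Real.cosh (k * (π - 2 * c)))) := by
    intro c m
    rw [← Real.exp_nat_mul, Real.cosh_eq, mul_div_cancel₀ _ (two_ne_zero),
      mul_add (Real.exp (-(π * k))), mul_add (Real.exp _),
      ← Real.exp_add, ← Real.exp_add, ← Real.exp_add, ← Real.exp_add]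
    congr 2 <;> ring
  have hterm : ∀ m : ℕ, (-Real.exp (-2 * k * (m * π + b')) + -Real.exp (-2 * k * (m * π + (π - b')))
        - -Real.exp (-2 * k * (m * π + b)) - -Real.exp (-2 * k * (m * π + (π - b))))
      = Real.exp (-2 * π * k) ^ m * (-2 * Real.exp (-(π * k)) *
        (Real.cosh (k * (π - 2 * b')) - Real.cosh (k * (π - 2 * b)))) := by
    intro m
    linear_combination hcosh b m - hcosh b' m
  simp_rw [hterm]
  rw [← Finset.sum_mul, geom_sum_eq hq.ne, ← Real.exp_nat_mul, Qf]
  have e1 : (M:ℝ) * (-2 * π * k) = -2 * π * M * k := by ring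
  rw [e1]
  have e2 : 1 - Real.exp (-2 * π * k) = 2 * Real.exp (-(π * k)) * Real.sinh (π * k) := by
    rw [Real.sinh_eq]
    have a1 : Real.exp (-(π * k)) * Real.exp (π * k) = 1 := by
      rw [← Real.exp_add]; simp
    have a2 : Real.exp (-(π * k)) * Real.exp (-(π * k)) = Real.exp (-2 * π * k) := by
      rw [← Real.exp_add]; congr 1; ring
    linear_combination a2 - a1
  have e3 : Real.exp (-2 * π * k) - 1 = -(2 * Real.exp (-(π * k)) * Real.sinh (π * k)) := by
    linarith
  rw [e3]
  have := Real.exp_pos (-(π * k))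
  generalize Real.exp (-(π * k)) = x at *
  generalize Real.sinh (π * k) = y at *
  field_simp
  ring

lemma Tser_sq_deriv {b b' k : ℝ} (hb'0 : 0 < b') (hb'b : b' < b) (hb : b ≤ π / 2) (hk : 0 < k) :
    HasDerivAt (fun k => Tser b b' (-k ^ 2)) (Qf b b' k) k := by
  have h1 : HasDerivAt (fun k : ℝ => -k ^ 2) (-(2 * k)) k := by
    have h0 := (hasDerivAt_pow 2 k).neg
    simp only [Nat.cast_ofNat, Nat.add_one_sub_one, pow_one] at h0
    exact h0
  have h2 := HasDerivAt.comp k (Tser_deriv_neg hb'0 hb'b hb hk) h1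
  have e : -(1 / (2 * k)) * Qf b b' k * -(2 * k) = Qf b b' k := by field_simp
  rw [e] at h2
  exact h2

lemma Tser_le_trunc {b b' K : ℝ} (hb'0 : 0 < b') (hb'b : b' < b) (hb : b ≤ π / 2) {M : ℕ}
    (hM : 0 < M) (hK : 0 ≤ K) :
    Tser b b' (-K ^ 2) ≤ Fim b b' M K - Fim b b' M 0 + 1 / (2 * M) := by
  have hpi := Real.pi_pos
  have hM' : (0:ℝ) < M := by exact_mod_cast hM
  let H : ℝ → ℝ := fun k => Tser b b' (-k ^ 2) - Fim b b' M k
    + 1 / (2 * M) * Real.exp (-2 * π * M * k)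
  have hexp : ∀ k, HasDerivAt (fun k : ℝ => 1 / (2 * (M:ℝ)) * Real.exp (-2 * π * M * k))
      (-π * Real.exp (-2 * π * M * k)) k := by
    intro k
    have h1 : HasDerivAt (fun k : ℝ => -2 * π * M * k) (-2 * π * M) k := by
      simpa using (hasDerivAt_id k).const_mul (-2 * π * M)
    have h2 := h1.exp.const_mul (1 / (2 * (M:ℝ)))
    have e : 1 / (2 * (M:ℝ)) * (Real.exp (-2 * π * M * k) * (-2 * π * M))
        = -π * Real.exp (-2 * π * M * k) := by field_simp
    rw [e] at h2
    exact h2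
  have hder : ∀ k, 0 < k → HasDerivAt H (Qf b b' k
      - (1 - Real.exp (-2 * π * M * k)) * Qf b b' k + -π * Real.exp (-2 * π * M * k)) k := by
    intro k hk
    exact ((Tser_sq_deriv hb'0 hb'b hb hk).sub (Fim_deriv hb'0 hb'b hb M hk)).add (hexp k)
  have hFc : Continuous (Fim b b' M) := by
    unfold Fim Eim
    fun_prop
  have hcont : ContinuousOn H (Set.Ici 0) := by
    apply ContinuousOn.add
    · apply ContinuousOn.sub
      · refine (Tser_cont b b').comp (f := fun k : ℝ => -k ^ 2) (by fun_prop) ?_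
        intro k _
        simp only [Set.mem_Iio]
        nlinarith [sq_nonneg k]
      · exact hFc.continuousOn
    · fun_prop
  have hanti : AntitoneOn H (Set.Ici 0) := by
    apply antitoneOn_of_deriv_nonpos (convex_Ici 0) hcont
    · intro k hk
      rw [interior_Ici] at hk
      exact (hder k hk).differentiableAt.differentiableWithinAt
    · intro k hk
      rw [interior_Ici] at hk
      rw [(hder k hk).deriv]
      have h1 := Qf_le hb'0 hb'b hb hk
      have h2 := Real.exp_pos (-2 * π * M * k)
      nlinarith
  have h := hanti (Set.mem_Ici.2 le_rfl) (Set.mem_Ici.2 hK) hK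
  have h0 : H 0 = - Fim b b' M 0 + 1 / (2 * M) := by
    simp [H, Tser_zero]
  have hE : 0 ≤ 1 / (2 * (M:ℝ)) * Real.exp (-2 * π * M * K) := by positivity
  rw [h0] at h
  simp only [H] at h
  linarith

lemma Tser_le_trunc' {b b' z : ℝ} (hb'0 : 0 < b') (hb'b : b' < b) (hb : b ≤ π / 2) {M : ℕ}
    (hM : 0 < M) (hz : z ≤ 0) : Tser b b' z ≤ - Fim b b' M 0 + 1 / (2 * M) := by
  have h1 : Tendsto (fun K => Fim b b' M K - Fim b b' M 0 + 1 / (2 * (M:ℝ))) atTop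
      (𝓝 (0 - Fim b b' M 0 + 1 / (2 * (M:ℝ)))) :=
    ((Fim_tendsto hb'0 hb'b hb M).sub_const _).add_const _
  rw [zero_sub] at h1
  refine ge_of_tendsto h1 ?_
  filter_upwards [eventually_ge_atTop (1 - z)] with K hK
  refine le_trans ?_ (Tser_le_trunc hb'0 hb'b hb hM (by linarith))
  apply (Tser_anti_neg hb'0 hb'b hb).antitoneOn
  · simp only [Set.mem_Iic]; nlinarith [sq_nonneg K]
  · exact hz
  · nlinarith

/-- The digamma part. -/
lemma Fim_zero_tendsto {b b' : ℝ} (hb'0 : 0 < b') (hb'b : b' < b) (hb : b ≤ π / 2) :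
    Tendsto (fun M : ℕ => - Fim b b' M 0 + 1 / (2 * (M:ℝ))) atTop
      (𝓝 ((digamma (b / π) + digamma (1 - b / π) - digamma (b' / π) - digamma (1 - b' / π)) / 2)) := by
  have hpi := Real.pi_pos
  have hx : 0 < b / π := div_pos (hb'0.trans hb'b) hpi
  have hx' : 0 < b' / π := div_pos hb'0 hpi
  have hx1 : 0 < 1 - b / π := by rw [sub_pos, div_lt_one hpi]; linarith
  have hx1' : 0 < 1 - b' / π := by rw [sub_pos, div_lt_one hpi]; linarith
  have h1 := ((((dg_sum hx).add (dg_sum hx1)).sub (dg_sum hx')).sub (dg_sum hx1')).div_const 2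
  have h2 := (tendsto_const_div_atTop_nhds_zero_nat (1 / 2 : ℝ))
  have h3 := h1.add h2
  rw [add_zero] at h3
  refine h3.congr fun M => ?_
  have e : ∀ (c : ℝ) (m : ℕ), Eim (m * π + c) 0 = 1 / (c / π + m) / (2 * π) := by
    intro c m
    have : (c / π + m) = (m * π + c) / π := by field_simp; ring
    rw [this, Eim]
    simp only [mul_zero, zero_mul, Real.exp_zero]
    field_simp
  have e' : ∀ c : ℝ, (π - c) / π = 1 - c / π := by intro c; field_simp
  unfold Fim
  simp_rw [e, e', Finset.sum_sub_distrib, Finset.sum_add_distrib, ← Finset.sum_div]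
  field_simp
  ring

lemma Tser_lt {b b' z : ℝ} (hb'0 : 0 < b') (hb'b : b' < b) (hb : b ≤ π / 2) (hz : z < 1) :
    Tser b b' z <
      (digamma (b / π) + digamma (1 - b / π) - digamma (b' / π) - digamma (1 - b' / π)) / 2 := by
  have hle : ∀ w ≤ 0, Tser b b' w ≤
      (digamma (b / π) + digamma (1 - b / π) - digamma (b' / π) - digamma (1 - b' / π)) / 2 := by
    intro w hw
    refine ge_of_tendsto (Fim_zero_tendsto hb'0 hb'b hb) ?_
    filter_upwards [eventually_gt_atTop 0] with M hM
    exact Tser_le_trunc' hb'0 hb'b hb hM hw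
  have hneg : ∀ w ≤ 0, Tser b b' w <
      (digamma (b / π) + digamma (1 - b / π) - digamma (b' / π) - digamma (1 - b' / π)) / 2 := by
    intro w hw
    refine lt_of_lt_of_le ?_ (hle (w - 1) (by linarith))
    exact Tser_anti_neg hb'0 hb'b hb (Set.mem_Iic.2 (by linarith)) hw (by linarith)
  rcases le_or_gt z 0 with h | h
  · exact hneg z h
  · refine lt_of_le_of_lt ?_ (hneg 0 le_rfl)
    exact (Tser_anti_pos hb'0 hb'b hb).antitoneOn ⟨le_rfl, one_pos⟩ ⟨h.le, hz⟩ h.le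

lemma summable_log_layer (z : ℝ) :
    Summable (fun n : ℕ => Real.log (1 - z / ((n:ℝ) + 1) ^ 2)) := by
  have h : Summable (fun n : ℕ => -z * (1 / ((n:ℝ) + 1) ^ 2)) := summable_inv_sq.mul_left _
  have := Real.summable_log_one_add_of_summable h
  refine this.congr fun n => ?_
  congr 1
  ring

lemma summable_xi (b z : ℝ) :
    Summable (fun n : ℕ => Real.log (Real.sqrt (1 - z / ((n : ℝ) + 1) ^ 2))
      * Real.sin (((n : ℝ) + 1) * b) ^ 2) := by
  refine Summable.of_norm_bounded (summable_log_layer z).norm ?_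
  intro n
  rw [norm_mul]
  have h1 : ‖Real.log (Real.sqrt (1 - z / ((n : ℝ) + 1) ^ 2))‖
      ≤ ‖Real.log (1 - z / ((n : ℝ) + 1) ^ 2)‖ := by
    rcases le_or_gt 0 (1 - z / ((n : ℝ) + 1) ^ 2) with h | h
    · rw [Real.log_sqrt h, norm_div]
      have := norm_nonneg (Real.log (1 - z / ((n : ℝ) + 1) ^ 2))
      rw [Real.norm_of_nonneg (show (0:ℝ) ≤ 2 by norm_num)]
      linarith
    · rw [Real.sqrt_eq_zero_of_nonpos h.le]
      simp
  have h2 : ‖Real.sin (((n : ℝ) + 1) * b) ^ 2‖ ≤ 1 := by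
    rw [Real.norm_of_nonneg (sq_nonneg _)]
    exact Real.sin_sq_le_one _
  calc _ ≤ ‖Real.log (1 - z / ((n : ℝ) + 1) ^ 2)‖ * 1 :=
        mul_le_mul h1 h2 (norm_nonneg _) (norm_nonneg _)
    _ = _ := mul_one _

lemma tsum_diff (b b' : ℝ) {z : ℝ} (hz : z < 1) :
    (∑' n : ℕ, Real.log (Real.sqrt (1 - z / ((n : ℝ) + 1) ^ 2)) * Real.sin (((n : ℝ) + 1) * b) ^ 2)
    - ∑' n : ℕ, Real.log (Real.sqrt (1 - z / ((n : ℝ) + 1) ^ 2)) * Real.sin (((n : ℝ) + 1) * b') ^ 2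
      = Tser b b' z / 4 := by
  rw [← (summable_xi b z).tsum_sub (summable_xi b' z), Tser, ← tsum_div_const]
  congr 1
  ext n
  have hn : (0:ℝ) ≤ n := Nat.cast_nonneg n
  have h : 0 ≤ 1 - z / ((n : ℝ) + 1) ^ 2 := by
    rw [sub_nonneg, div_le_one (by positivity)]
    nlinarith
  rw [Real.log_sqrt h, dco, Real.sin_sq_eq_half_sub, Real.sin_sq_eq_half_sub]
  have e : ∀ c : ℝ, 2 * (((n:ℝ) + 1) * c) = 2 * ((n:ℝ) + 1) * c := by intro c; ring
  rw [e, e]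
  ring

/-- Strict monotonicity of the regularized Green's function across the halflayer:
for `0 < b' < b ≤ π/2` and `z < 1` one has `ξ(b,z) > ξ(b',z)`. -/
theorem xiLayer_monotone_halflayer (b b' z : ℝ) (hb'0 : 0 < b') (hb'b : b' < b)
    (hb : b ≤ π / 2) (hz : z < 1) :
    xiLayer b' z < xiLayer b z := by
  have hpi := Real.pi_pos
  have hT := Tser_lt hb'0 hb'b hb hz
  have hd := tsum_diff b b' hz
  have r1 := dg_refl (x := b / π) (div_pos (hb'0.trans hb'b) hpi)
    (by rw [div_lt_one hpi]; linarith)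
  have r2 := dg_refl (x := b' / π) (div_pos hb'0 hpi) (by rw [div_lt_one hpi]; linarith)
  rw [mul_div_cancel₀ _ hpi.ne'] at r1 r2
  rw [r1, r2] at hT
  unfold xiLayer
  rw [← sub_pos]
  set S := ∑' n : ℕ, Real.log (Real.sqrt (1 - z / ((n : ℝ) + 1) ^ 2))
    * Real.sin (((n : ℝ) + 1) * b) ^ 2 with hS
  set S' := ∑' n : ℕ, Real.log (Real.sqrt (1 - z / ((n : ℝ) + 1) ^ 2))
    * Real.sin (((n : ℝ) + 1) * b') ^ 2 with hS'
  have hc : 0 < 1 / (4 * π ^ 2) := by positivity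
  have hmul := mul_pos hc (sub_pos.2 hT)
  have e4 : 1 / π ^ 2 = 4 * (1 / (4 * π ^ 2)) := by field_simp
  rw [e4]
  have hTS : Tser b b' z = 4 * (S - S') := by linarith
  rw [hTS] at hmul
  refine lt_of_lt_of_eq hmul ?_
  ring
end

section
/- Strong-coupling asymptotics: for every b ∈ (0,π) and every c with 0 < c < π/2 − |b − π/2|, there exist C > 0 and α₀ < 0 such that |ε(α,b) + 16π²α²| ≤ C·e^{cα} for all α ≤ α₀; moreover ε(α,b) ≥ −16π²α² for all α < 0. In particular ε(α,b) = −16π²α² + O(e^{αc}) as α → −∞. -/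
open Real Filter Topology Asymptotics

lemma exp_lt_one_of_neg' {u : ℝ} (h : u < 0) : Real.exp u < 1 := by
  simpa using Real.exp_lt_exp.2 h

/-- image-charge term -/
noncomputable def imT (x : ℝ) (m : ℕ) (s : ℝ) : ℝ :=
  Real.exp (-s * (m + x)) / (m + x) - Real.exp (-s * (m + 1)) / (m + 1)

noncomputable def imP (x s : ℝ) : ℝ := ∑' m : ℕ, imT x m s

lemma imT_nonneg (x : ℝ) (h0 : 0 < x) (h1 : x < 1) (m : ℕ) (s : ℝ) (hs : 0 ≤ s) :
    0 ≤ imT x m s := by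
  unfold imT
  have : (0:ℝ) ≤ m := m.cast_nonneg
  rw [sub_nonneg]
  apply div_le_div₀ (exp_pos _).le _ (by positivity) (by linarith)
  apply Real.exp_le_exp.2
  nlinarith

lemma imT_le (x : ℝ) (h0 : 0 < x) (h1 : x < 1) (m : ℕ) (s : ℝ) (hs : 0 ≤ s) :
    imT x m s ≤ 2 / x * (1 / ((m:ℝ) + 1) ^ 2) := by
  unfold imT
  have hm : (0:ℝ) ≤ m := m.cast_nonneg
  set t : ℝ := m + x with ht
  have ht0 : 0 < t := by positivity
  set t' : ℝ := m + 1 with ht'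
  have ht'0 : 0 < t' := by positivity
  have e1 : Real.exp (-s * t) * (s * t) ≤ 1 := by
    have := Real.add_one_le_exp (s * t)
    have e : Real.exp (-s * t) * Real.exp (s * t) = 1 := by
      rw [← Real.exp_add]; ring_nf; simp
    nlinarith [Real.exp_pos (-s * t)]
  have e0 : Real.exp (-s * t) ≤ 1 := by
    rw [Real.exp_le_one_iff]; nlinarith
  have e2 : Real.exp (-s * t) * (1 - s * (t' - t)) ≤ Real.exp (-s * t') := by
    have := Real.add_one_le_exp (-s * (t' - t))
    have e : Real.exp (-s * t') = Real.exp (-s * t) * Real.exp (-s * (t' - t)) := by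
      rw [← Real.exp_add]; ring_nf
    rw [e]
    apply mul_le_mul_of_nonneg_left _ (exp_pos _).le
    linarith
  have hx : x * t' ≤ t := by rw [ht, ht']; nlinarith
  have htt : 0 ≤ t' - t := by rw [ht, ht']; linarith
  have htt1 : t' - t ≤ 1 := by rw [ht, ht']; linarith
  have k1 : Real.exp (-s * t) / t - Real.exp (-s * t') / t' ≤ 2 / (t * t') := by
    rw [div_sub_div _ _ ht0.ne' ht'0.ne']
    apply div_le_div_of_nonneg_right _ (by positivity)
    have : t * (Real.exp (-s * t) * (1 - s * (t' - t))) ≤ t * Real.exp (-s * t') :=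
      mul_le_mul_of_nonneg_left e2 ht0.le
    have a1 : Real.exp (-s * t) * (t' - t) ≤ 1 * 1 := mul_le_mul e0 htt1 htt zero_le_one
    have a2 : Real.exp (-s * t) * (s * t) * (t' - t) ≤ 1 * 1 := mul_le_mul e1 htt1 htt zero_le_one
    nlinarith
  refine k1.trans ?_
  rw [div_mul_div_comm, mul_one]
  apply div_le_div_of_nonneg_left (by norm_num) (by positivity)
  nlinarith

lemma sum_sq : Summable (fun m : ℕ => 1 / ((m:ℝ) + 1) ^ 2) := by
  have := (summable_nat_add_iff 1).2 ((Real.summable_one_div_nat_pow (p := 2)).2 (by norm_num))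
  simpa using this

lemma imT_summable (x : ℝ) (h0 : 0 < x) (h1 : x < 1) (s : ℝ) (hs : 0 ≤ s) :
    Summable (fun m => imT x m s) :=
  Summable.of_nonneg_of_le (fun m => imT_nonneg x h0 h1 m s hs) (fun m => imT_le x h0 h1 m s hs)
    (sum_sq.mul_left _)

lemma imP_nonneg (x : ℝ) (h0 : 0 < x) (h1 : x < 1) (s : ℝ) (hs : 0 ≤ s) : 0 ≤ imP x s :=
  tsum_nonneg (fun m => imT_nonneg x h0 h1 m s hs)

lemma imP_cont (x : ℝ) (h0 : 0 < x) (h1 : x < 1) : ContinuousOn (imP x) (Set.Ici 0) := by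
  refine continuousOn_tsum (f := imT x) ?_ (sum_sq.mul_left (2/x)) ?_
  · intro m
    unfold imT
    fun_prop
  · intro m s hs
    rw [Real.norm_of_nonneg (imT_nonneg x h0 h1 m s hs)]
    exact imT_le x h0 h1 m s hs

lemma imP_le (x : ℝ) (h0 : 0 < x) (h1 : x < 1) (s : ℝ) (hs : 1 ≤ s) :
    imP x s ≤ (1 / x * (1 - Real.exp (-1))⁻¹) * Real.exp (-s * x) := by
  have g := hasSum_geometric_of_lt_one (exp_pos (-1)).le (exp_lt_one_of_neg' (by norm_num : (-1:ℝ) < 0))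
  have g2 := g.mul_left (1 / x * Real.exp (-s * x))
  have : imP x s ≤ 1 / x * Real.exp (-s * x) * (1 - Real.exp (-1))⁻¹ := by
    refine hasSum_le ?_ (imT_summable x h0 h1 s (by linarith)).hasSum g2
    intro m
    have hm : (0:ℝ) ≤ m := m.cast_nonneg
    have : imT x m s ≤ Real.exp (-s * (m + x)) / (m + x) := by
      unfold imT
      have : 0 < Real.exp (-s * (m + 1)) / ((m:ℝ) + 1) := by positivity
      linarith
    refine this.trans ?_
    rw [← Real.exp_nat_mul, mul_assoc, ← Real.exp_add, div_eq_mul_one_div, mul_comm]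
    apply mul_le_mul
    · apply one_div_le_one_div_of_le h0; linarith
    · apply Real.exp_le_exp.2; nlinarith
    · positivity
    · positivity
  linarith

lemma imP_deriv (x : ℝ) (h0 : 0 < x) (h1 : x < 1) (s : ℝ) (hs : 0 < s) :
    HasDerivAt (imP x) (-(Real.exp (-s * x) - Real.exp (-s)) / (1 - Real.exp (-s))) s := by
  have q1 : Real.exp (-s) < 1 := exp_lt_one_of_neg' (by linarith)
  have g := hasSum_geometric_of_lt_one (exp_pos (-s)).le q1
  have gv : HasSum (fun m : ℕ => -(Real.exp (-s * (m + x)) - Real.exp (-s * (m + 1))))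
      (-(Real.exp (-s * x) - Real.exp (-s)) / (1 - Real.exp (-s))) := by
    convert! g.mul_left (-(Real.exp (-s * x) - Real.exp (-s))) using 1
    ext m
    rw [← Real.exp_nat_mul, neg_mul (Real.exp (-s * x) - Real.exp (-s)), sub_mul, ← Real.exp_add, ← Real.exp_add]
    ring_nf
  rw [← gv.tsum_eq]
  have r1 : Real.exp (-(s/2)) < 1 := exp_lt_one_of_neg' (by linarith)
  have hu := (hasSum_geometric_of_lt_one (exp_pos (-(s/2))).le r1).summable
  refine hasDerivAt_tsum_of_isPreconnected (g := imT x)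
    (g' := fun m y => -(Real.exp (-y * (m + x)) - Real.exp (-y * (m + 1))))
    hu isOpen_Ioi (t := Set.Ioi (s/2)) isPreconnected_Ioi ?_ ?_ (y₀ := s) ?_ ?_ ?_
  · intro m y hy
    have hm : (0:ℝ) ≤ m := m.cast_nonneg
    have ha : (m:ℝ) + x ≠ 0 := by positivity
    have hb : (m:ℝ) + 1 ≠ 0 := by positivity
    have a : HasDerivAt (fun y : ℝ => Real.exp (-y * (m + x)) / (m + x)) (-Real.exp (-y * (m + x))) y := by
      have := ((((hasDerivAt_id y).neg).mul_const ((m:ℝ)+x)).exp).div_const ((m:ℝ)+x)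
      convert! this using 1
      simp; field_simp; ring
    have b : HasDerivAt (fun y : ℝ => Real.exp (-y * (m + 1)) / (m + 1)) (-Real.exp (-y * (m + 1))) y := by
      have := ((((hasDerivAt_id y).neg).mul_const ((m:ℝ)+1)).exp).div_const ((m:ℝ)+1)
      convert! this using 1
      simp; field_simp; ring
    convert! a.sub b using 1
    ring
  · intro m y hy
    have hy : s/2 < y := hy
    have hm : (0:ℝ) ≤ m := m.cast_nonneg
    have l : Real.exp (-y * (m + 1)) ≤ Real.exp (-y * (m + x)) := by
      apply Real.exp_le_exp.2; nlinarith
    rw [norm_neg, Real.norm_of_nonneg (by linarith), ← Real.exp_nat_mul]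
    have l2 : Real.exp (-y * (m + x)) ≤ Real.exp (m * -(s/2)) := by
      apply Real.exp_le_exp.2; nlinarith
    linarith [Real.exp_pos (-y * (m + 1))]
  · show s/2 < s
    linarith
  · exact imT_summable x h0 h1 s hs.le
  · show s/2 < s
    linarith

lemma fc_int (s : ℝ) (hs : 0 < s) (n : ℤ) :
    ∫ y in (0:ℝ)..1, (fourier (-n) (y : AddCircle (1:ℝ)) : ℂ) • (Complex.cosh (s * (1/2 - y)))
      = Complex.sinh (s/2) * (2 * s / (s^2 + 4 * π^2 * n^2)) := by
  have hs' : (s:ℂ) ≠ 0 := by exact_mod_cast hs.ne'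
  have h1 : (-(s:ℂ) - 2 * π * Complex.I * n) ≠ 0 := by
    intro h; have := congrArg Complex.re h; simp at this; linarith
  have h2 : ((s:ℂ) - 2 * π * Complex.I * n) ≠ 0 := by
    intro h; have := congrArg Complex.re h; simp at this; linarith
  have e : ∀ y : ℝ, (fourier (-n) (y : AddCircle (1:ℝ)) : ℂ) • (Complex.cosh (s * (1/2 - y)))
      = Complex.exp (s/2) / 2 * Complex.exp ((-(s:ℂ) - 2 * π * Complex.I * n) * y)
        + Complex.exp (-s/2) / 2 * Complex.exp (((s:ℂ) - 2 * π * Complex.I * n) * y) := by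
    intro y
    rw [fourier_coe_apply, Complex.cosh, smul_eq_mul, mul_div_assoc', mul_add,
      ← Complex.exp_add, ← Complex.exp_add, div_mul_eq_mul_div, div_mul_eq_mul_div,
      ← Complex.exp_add, ← Complex.exp_add, ← add_div]
    push_cast
    ring_nf
  simp_rw [e]
  rw [intervalIntegral.integral_add, intervalIntegral.integral_const_mul,
    intervalIntegral.integral_const_mul, integral_exp_mul_complex h1, integral_exp_mul_complex h2]
  · have p1 : Complex.exp ((-(s:ℂ) - 2 * π * Complex.I * n) * (1:ℝ)) = Complex.exp (-s) := by
      rw [show (-(s:ℂ) - 2 * π * Complex.I * n) * (1:ℝ) = -s + ((-n : ℤ) : ℂ) * (2 * π * Complex.I) by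
        push_cast; ring, Complex.exp_add, Complex.exp_int_mul_two_pi_mul_I, mul_one]
    have p2 : Complex.exp (((s:ℂ) - 2 * π * Complex.I * n) * (1:ℝ)) = Complex.exp (s) := by
      rw [show ((s:ℂ) - 2 * π * Complex.I * n) * (1:ℝ) = s + ((-n : ℤ) : ℂ) * (2 * π * Complex.I) by
        push_cast; ring, Complex.exp_add, Complex.exp_int_mul_two_pi_mul_I, mul_one]
    rw [p1, p2, Complex.sinh]
    have q1 : Complex.exp (-s) = Complex.exp (-s/2) * Complex.exp (-s/2) := by
      rw [← Complex.exp_add]; ring_nf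
    have q2 : Complex.exp (s) = Complex.exp (s/2) * Complex.exp (s/2) := by
      rw [← Complex.exp_add]; ring_nf
    have q3 : Complex.exp (s/2) * Complex.exp (-s/2) = 1 := by
      rw [← Complex.exp_add]; ring_nf; simp
    have q4 : (s:ℂ)^2 + 4 * π^2 * n^2 = -((-(s:ℂ) - 2 * π * Complex.I * n) * ((s:ℂ) - 2 * π * Complex.I * n)) := by
      ring_nf; rw [Complex.I_sq]; ring
    rw [q1, q2, q4, show -((s:ℂ)/2) = -s/2 by ring]
    set E := Complex.exp (s/2)
    set F := Complex.exp (-s/2)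
    simp only [Complex.ofReal_zero, mul_zero, Complex.exp_zero]
    field_simp
    linear_combination (F * (s - 2 * π * Complex.I * n) - E * (s + 2 * π * Complex.I * n)) * q3
  · exact Continuous.intervalIntegrable (by fun_prop) _ _
  · exact Continuous.intervalIntegrable (by fun_prop) _ _


noncomputable def fcB (s : ℝ) : C(AddCircle (1:ℝ), ℂ) :=
  ⟨AddCircle.liftIco (1:ℝ) 0 (fun y : ℝ => Complex.cosh (s * (1/2 - y))), by
    apply AddCircle.liftIco_continuous
    · rw [← Complex.cosh_neg]; congr 1; push_cast; ring
    · exact Continuous.continuousOn (by fun_prop)⟩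

lemma fcB_apply (s y : ℝ) (h0 : 0 ≤ y) (h1 : y < 1) :
    fcB s (y : AddCircle (1:ℝ)) = Complex.cosh (s * (1/2 - y)) := by
  rw [fcB, ContinuousMap.coe_mk, AddCircle.liftIco_coe_apply ⟨h0, by simpa using h1⟩]

lemma fcB_coeff (s : ℝ) (hs : 0 < s) (n : ℤ) :
    fourierCoeff (fcB s) n = Complex.sinh (s/2) * (2 * s / (s^2 + 4 * π^2 * n^2)) := by
  rw [fourierCoeff_eq_intervalIntegral _ _ 0, ← fc_int s hs n]
  simp only [zero_add, div_one, one_smul]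
  refine intervalIntegral.integral_congr_Ioo_of_le zero_le_one fun x hx => ?_
  rw [fcB_apply s x hx.1.le hx.2]

lemma fc_summable (s : ℝ) (hs : 0 < s) :
    Summable (fun n : ℤ => Complex.sinh (s/2) * (2 * s / (s^2 + 4 * π^2 * n^2) : ℂ)) := by
  apply Summable.mul_left
  have h := (Real.summable_one_div_int_pow (p := 2)).2 (by norm_num)
  refine Summable.of_norm_bounded_eventually (g := fun n : ℤ => 2 * s * (1 / (n:ℝ)^2)) (h.mul_left _) ?_
  have : {(0:ℤ)}ᶜ ∈ (cofinite : Filter ℤ) := (Set.finite_singleton 0).compl_mem_cofinite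
  filter_upwards [this] with n hn
  have hn' : (n:ℝ) ≠ 0 := by exact_mod_cast hn
  have e : (2 * s / (s^2 + 4 * π^2 * n^2) : ℂ) = ((2 * s / (s^2 + 4 * π^2 * n^2) : ℝ) : ℂ) := by
    push_cast; rfl
  have h2 : 0 < (n:ℝ)^2 := by positivity
  rw [e, Complex.norm_real, Real.norm_of_nonneg (by positivity), mul_one_div]
  apply div_le_div_of_nonneg_left (by positivity) h2
  have h3 : 1 ≤ 4 * π^2 := by nlinarith [pi_gt_three]
  nlinarith [sq_nonneg s, mul_le_mul_of_nonneg_right h3 h2.le]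

lemma fc_hasSum (s y : ℝ) (hs : 0 < s) (h0 : 0 ≤ y) (h1 : y < 1) :
    HasSum (fun n : ℤ => Complex.sinh (s/2) * (2 * s / (s^2 + 4 * π^2 * n^2))
      * Complex.exp (2 * π * Complex.I * n * y)) (Complex.cosh (s * (1/2 - y))) := by
  have := has_pointwise_sum_fourier_series_of_summable
    ((fc_summable s hs).congr fun n => (fcB_coeff s hs n).symm) (y : AddCircle (1:ℝ))
  rw [fcB_apply s y h0 h1] at this
  convert this using 2 with n
  rw [fcB_coeff s hs n, fourier_coe_apply, smul_eq_mul]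
  simp

lemma fc_real (s x : ℝ) (hs : 0 < s) (h0 : 0 ≤ x) (h1 : x < 1) :
    HasSum (fun n : ℕ => 4 * (Real.sinh (s/2) * (2 * s / (s^2 + 4 * π^2 * ((n:ℝ)+1)^2)))
      * Real.sin (((n:ℝ)+1) * (π * x)) ^ 2) (Real.cosh (s/2) - Real.cosh (s * (1/2 - x))) := by
  have A := (fc_hasSum s 0 hs le_rfl one_pos).sub (fc_hasSum s x hs h0 h1)
  have A2 := A.nat_add_neg
  have A3 := (hasSum_nat_add_iff' 1).2 A2
  rw [← Complex.hasSum_ofReal]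
  convert! A3 using 1
  · ext n
    push_cast
    have c : Complex.sin (((n:ℂ)+1) * (π * x))^2 = 1/2 - Complex.cos (2 * (((n:ℂ)+1) * (π * x)))/2 := by
      rw [Complex.cos_two_mul', Complex.cos_sq']; ring
    rw [c, Complex.cos]
    simp only [mul_zero, Complex.exp_zero]
    ring_nf
  · simp
    ring_nf

noncomputable def logS (b : ℝ) (n : ℕ) (k : ℝ) : ℝ :=
  Real.log (Real.sqrt (1 + k ^ 2 / ((n : ℝ) + 1) ^ 2)) * Real.sin (((n : ℝ) + 1) * b) ^ 2


lemma logS_deriv (b : ℝ) (k : ℝ) :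
    HasDerivAt (fun k => ∑' n, logS b n k)
      (∑' n : ℕ, k / (k ^ 2 + ((n:ℝ) + 1) ^ 2) * Real.sin (((n : ℝ) + 1) * b) ^ 2) k := by
  refine hasDerivAt_tsum_of_isPreconnected (g := logS b)
    (g' := fun n k => k / (k ^ 2 + ((n:ℝ) + 1) ^ 2) * Real.sin (((n : ℝ) + 1) * b) ^ 2)
    (sum_sq.mul_left (|k| + 1)) isOpen_Ioo (t := Set.Ioo (-(|k|+1)) (|k| + 1)) isPreconnected_Ioo
    ?_ ?_ (y₀ := 0) ?_ ?_ ?_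
  · intro n y hy
    unfold logS
    apply HasDerivAt.mul_const
    have p : 0 < 1 + y ^ 2 / ((n : ℝ) + 1) ^ 2 := by positivity
    have e : (fun y : ℝ => Real.log (Real.sqrt (1 + y ^ 2 / ((n : ℝ) + 1) ^ 2)))
        = fun y : ℝ => Real.log (1 + y ^ 2 / ((n : ℝ) + 1) ^ 2) / 2 := by
      ext y
      rw [Real.log_sqrt (by positivity)]
    rw [e]
    have := (((((hasDerivAt_id y).pow 2).div_const (((n:ℝ)+1)^2)).const_add 1).log p.ne').div_const 2
    convert! this using 1
    simp
    field_simp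
    ring
  · intro n y hy
    have hy' : |y| ≤ |k| + 1 := (abs_lt.2 hy).le
    rw [norm_mul, norm_div, Real.norm_eq_abs, Real.norm_of_nonneg (by positivity),
      Real.norm_of_nonneg (by positivity)]
    have s1 : Real.sin (((n : ℝ) + 1) * b) ^ 2 ≤ 1 := Real.sin_sq_le_one _
    calc |y| / (y ^ 2 + ((n:ℝ) + 1) ^ 2) * Real.sin (((n : ℝ) + 1) * b) ^ 2
        ≤ |y| / (y ^ 2 + ((n:ℝ) + 1) ^ 2) * 1 := by gcongr
      _ ≤ (|k| + 1) / (((n:ℝ) + 1) ^ 2) := by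
        rw [mul_one]
        apply div_le_div₀ (by positivity) hy' (by positivity)
        nlinarith [sq_nonneg y]
      _ = _ := by ring
  · constructor <;> linarith [abs_nonneg k]
  · simp [logS, summable_zero]
  · exact ⟨by linarith [neg_abs_le k], by linarith [le_abs_self k]⟩

lemma term_summable (b z : ℝ) (hz : z < 1) : Summable (fun n : ℕ =>
    Real.log (Real.sqrt (1 - z / ((n : ℝ) + 1) ^ 2)) * Real.sin (((n : ℝ) + 1) * b) ^ 2) := by
  -- |log (1 - w)| ≤ C |w|
  have hw : ∀ n : ℕ, 0 < 1 - z / ((n : ℝ) + 1) ^ 2 := by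
    intro n
    rw [sub_pos, div_lt_one (by positivity)]
    have hm : (0:ℝ) ≤ n := n.cast_nonneg
    nlinarith
  have key : Summable (fun n : ℕ => Real.log (1 + (-z / ((n : ℝ) + 1) ^ 2))) := by
    apply Real.summable_log_one_add_of_summable
    simpa [div_eq_mul_one_div (-z)] using sum_sq.mul_left (-z)
  refine Summable.of_norm_bounded (g := fun n : ℕ => |Real.log (1 + (-z / ((n : ℝ) + 1) ^ 2))|) key.abs ?_
  intro n
  rw [Real.log_sqrt (hw n).le, norm_mul, norm_div, Real.norm_eq_abs,
    show 1 + (-z / ((n : ℝ) + 1) ^ 2) = 1 - z / ((n : ℝ) + 1) ^ 2 by ring,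
    Real.norm_of_nonneg (sq_nonneg (Real.sin (((n : ℝ) + 1) * b)))]
  have s1 : Real.sin (((n : ℝ) + 1) * b) ^ 2 ≤ 1 := Real.sin_sq_le_one _
  have := abs_nonneg (Real.log (1 - z / ((n : ℝ) + 1) ^ 2))
  norm_num
  nlinarith [sq_nonneg (Real.sin (((n : ℝ) + 1) * b))]

lemma sum_anti (b z z' : ℝ) (hz : z ≤ z') (hz' : z' < 1) : 
    ∑' n : ℕ, Real.log (Real.sqrt (1 - z' / ((n : ℝ) + 1) ^ 2)) * Real.sin (((n : ℝ) + 1) * b) ^ 2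
    ≤ ∑' n : ℕ, Real.log (Real.sqrt (1 - z / ((n : ℝ) + 1) ^ 2)) * Real.sin (((n : ℝ) + 1) * b) ^ 2 := by
  refine Summable.tsum_le_tsum ?_ (term_summable b z' hz') (term_summable b z (by linarith))
  intro n
  have hw : 0 < 1 - z' / ((n : ℝ) + 1) ^ 2 := by
    rw [sub_pos, div_lt_one (by positivity)]
    have hm : (0:ℝ) ≤ n := n.cast_nonneg
    nlinarith
  apply mul_le_mul_of_nonneg_right _ (sq_nonneg _)
  apply Real.log_le_log (Real.sqrt_pos.2 hw)
  apply Real.sqrt_le_sqrt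
  gcongr

lemma gamma_diff (x : ℝ) (hx : 0 < x) : DifferentiableAt ℝ Real.Gamma x :=
  Real.differentiableAt_Gamma (fun m => by have : (0:ℝ) ≤ m := m.cast_nonneg; linarith)

lemma logGamma_deriv (x : ℝ) (hx : 0 < x) :
    HasDerivAt (Real.log ∘ Real.Gamma) (digamma x) x :=
  ((gamma_diff x hx).hasDerivAt).log (Real.Gamma_pos_of_pos hx).ne'

lemma digamma_add_one (x : ℝ) (hx : 0 < x) : digamma (x + 1) = digamma x + 1 / x := by
  have h1 := (logGamma_deriv (x+1) (by linarith)).comp_add_const x 1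
  have h2 := (logGamma_deriv x hx).add (Real.hasDerivAt_log hx.ne')
  have : (fun y => (Real.log ∘ Real.Gamma) (y + 1)) =ᶠ[𝓝 x] (Real.log ∘ Real.Gamma) + Real.log := by
    filter_upwards [lt_mem_nhds hx] with y hy
    simp only [Function.comp, Pi.add_apply]
    rw [Real.Gamma_add_one hy.ne', Real.log_mul hy.ne' (Real.Gamma_pos_of_pos hy).ne', add_comm]
  rw [one_div]
  exact h1.unique (h2.congr_of_eventuallyEq this)

lemma digamma_mono {x y : ℝ} (hx : 0 < x) (hxy : x ≤ y) : digamma x ≤ digamma y := by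
  have := Real.convexOn_log_Gamma.monotoneOn_deriv (fun z hz => (logGamma_deriv z hz).differentiableAt)
  have h := this hx (lt_of_lt_of_le hx hxy) hxy
  rwa [(logGamma_deriv x hx).deriv, (logGamma_deriv y (lt_of_lt_of_le hx hxy)).deriv] at h

lemma digamma_one : digamma 1 = -Real.eulerMascheroniConstant := by
  rw [digamma, Real.hasDerivAt_Gamma_one.deriv, Real.Gamma_one, div_one]

lemma digamma_add_nat (x : ℝ) (hx : 0 < x) (n : ℕ) :
    digamma (x + n) = digamma x + ∑ m ∈ Finset.range n, 1 / ((m:ℝ) + x) := by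
  induction n with
  | zero => simp
  | succ n ih =>
    rw [Finset.sum_range_succ, ← add_assoc, ← ih, Nat.cast_succ, ← add_assoc,
      digamma_add_one _ (by positivity), add_comm x]

lemma digamma_series (x : ℝ) (h0 : 0 < x) (h1 : x < 1)
    (hs : Summable (fun m : ℕ => 1 / ((m:ℝ) + x) - 1 / ((m:ℝ) + 1))) :
    ∑' m : ℕ, (1 / ((m:ℝ) + x) - 1 / ((m:ℝ) + 1)) = -Real.eulerMascheroniConstant - digamma x := by
  have ht := hs.hasSum.tendsto_sum_nat
  refine tendsto_nhds_unique ht ?_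
  have e : ∀ n : ℕ, ∑ m ∈ Finset.range n, (1 / ((m:ℝ) + x) - 1 / ((m:ℝ) + 1))
      = (-Real.eulerMascheroniConstant - digamma x) - (digamma (1 + n) - digamma (x + n)) := by
    intro n
    rw [digamma_add_nat x h0, digamma_add_nat 1 one_pos, digamma_one, Finset.sum_sub_distrib]
    ring
  simp_rw [e]
  have : Tendsto (fun n : ℕ => digamma (1 + n) - digamma (x + n)) atTop (𝓝 0) := by
    have l : Tendsto (fun n : ℕ => 1 / (x + n)) atTop (𝓝 0) := by
      simp_rw [one_div]
      exact tendsto_inv_atTop_zero.comp (tendsto_atTop_add_const_left _ _ tendsto_natCast_atTop_atTop)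
    refine squeeze_zero (fun n => ?_) (fun n => ?_) l
    · rw [sub_nonneg]; exact digamma_mono (by positivity) (by linarith)
    · have : digamma (1 + n) ≤ digamma (x + n + 1) := digamma_mono (by positivity) (by linarith)
      rw [digamma_add_one _ (by positivity)] at this
      linarith
  simpa using this.const_sub (-Real.eulerMascheroniConstant - digamma x)

lemma digamma_refl (x : ℝ) (h0 : 0 < x) (h1 : x < 1) :
    digamma (1 - x) - digamma x = π * Real.cot (π * x) := by
  have hsin : 0 < Real.sin (π * x) := Real.sin_pos_of_pos_of_lt_pi (by positivity) (by nlinarith [pi_pos])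
  have a := logGamma_deriv x h0
  have b : HasDerivAt (fun y => (Real.log ∘ Real.Gamma) (1 - y)) (-digamma (1 - x)) x :=
    (logGamma_deriv (1-x) (by linarith)).comp_const_sub 1 x
  have c : HasDerivAt (fun y => Real.log π - Real.log (Real.sin (π * y))) (-(π * Real.cot (π * x))) x := by
    have := ((((hasDerivAt_id x).const_mul π).sin).log hsin.ne').const_sub (Real.log π)
    convert! this using 1
    rw [Real.cot_eq_cos_div_sin]; simp; ring
  have e : (Real.log ∘ Real.Gamma) + (fun y => (Real.log ∘ Real.Gamma) (1 - y)) =ᶠ[𝓝 x]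
      (fun y => Real.log π - Real.log (Real.sin (π * y))) := by
    filter_upwards [Ioo_mem_nhds h0 h1] with y hy
    have hs : 0 < Real.sin (π * y) :=
      Real.sin_pos_of_pos_of_lt_pi (mul_pos pi_pos hy.1) (by nlinarith [pi_pos, hy.2])
    simp only [Function.comp, Pi.add_apply]
    rw [← Real.log_mul (Real.Gamma_pos_of_pos hy.1).ne' (Real.Gamma_pos_of_pos (by linarith [hy.2])).ne',
      Real.Gamma_mul_Gamma_one_sub, Real.log_div pi_pos.ne' hs.ne']
  have := (a.add b).unique (c.congr_of_eventuallyEq e)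
  linarith

lemma imP_zero (x : ℝ) (h0 : 0 < x) (h1 : x < 1) :
    imP x 0 = -Real.eulerMascheroniConstant - digamma x := by
  have hs := imT_summable x h0 h1 0 le_rfl
  have e : (fun m => imT x m 0) = fun m : ℕ => 1 / ((m:ℝ) + x) - 1 / ((m:ℝ) + 1) := by
    ext m; simp [imT]
  rw [e] at hs
  rw [imP, e]
  exact digamma_series x h0 h1 hs

lemma logS_deriv' (x k : ℝ) (h0 : 0 < x) (h1 : x < 1) (hk : 0 < k) :
    HasDerivAt (fun k => ∑' n, logS (π * x) n k)
      (π / 4 * (Real.cosh (π * k) - Real.cosh (2 * π * k * (1/2 - x))) / Real.sinh (π * k)) k := by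
  convert! logS_deriv (π * x) k using 1
  have h := fc_real (2 * π * k) x (by positivity) h0.le h1
  have hsh : 0 < Real.sinh (π * k) := Real.sinh_pos_iff.2 (by positivity)
  have e1 : 2 * π * k / 2 = π * k := by ring
  rw [e1] at h
  have h2 := (h.mul_left (π / 4 / Real.sinh (π * k))).tsum_eq
  rw [show π / 4 * (Real.cosh (π * k) - Real.cosh (2 * π * k * (1/2 - x))) / Real.sinh (π * k)
    = π / 4 / Real.sinh (π * k) * (Real.cosh (π * k) - Real.cosh (2 * π * k * (1/2 - x))) by ring, ← h2]
  congr 1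
  ext n
  have p : (0:ℝ) < k ^ 2 + ((n:ℝ) + 1) ^ 2 := by positivity
  rw [show (2 * π * k) ^ 2 + 4 * π ^ 2 * ((n:ℝ) + 1) ^ 2 = 4 * π ^ 2 * (k ^ 2 + ((n:ℝ) + 1) ^ 2) by ring]
  field_simp
  try ring

lemma alg_zero (x k : ℝ) (hk : 0 < k) :
    -(1 / π ^ 2) * (π / 4 * (Real.cosh (π * k) - Real.cosh (2 * π * k * (1/2 - x))) / Real.sinh (π * k))
      + 1 / (4 * π) + 1 / (8 * π ^ 2) *
      ((-(Real.exp (-(2 * π * k) * x) - Real.exp (-(2 * π * k))) / (1 - Real.exp (-(2 * π * k)))) * (2 * π)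
      + (-(Real.exp (-(2 * π * k) * (1 - x)) - Real.exp (-(2 * π * k))) / (1 - Real.exp (-(2 * π * k)))) * (2 * π))
    = 0 := by
  have hE : 1 < Real.exp (π * k) := by
    simpa using Real.exp_lt_exp.2 (show (0:ℝ) < π * k by positivity)
  set E := Real.exp (π * k) with hEd
  set X := Real.exp (2 * π * k * x) with hX
  have hX0 : 0 < X := Real.exp_pos _
  have hE0 : 0 < E := Real.exp_pos _
  have a1 : Real.exp (-(π * k)) = E⁻¹ := Real.exp_neg _
  have a2 : Real.exp (-(2 * π * k)) = (E * E)⁻¹ := by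
    rw [Real.exp_neg, hEd, ← Real.exp_add]; ring_nf
  have a3 : Real.exp (-(2 * π * k) * x) = X⁻¹ := by rw [neg_mul, Real.exp_neg]
  have a4 : Real.exp (-(2 * π * k) * (1 - x)) = X * (E * E)⁻¹ := by
    rw [← a2, hX, ← Real.exp_add]; ring_nf
  have a5 : Real.exp (2 * π * k * (1/2 - x)) = E * X⁻¹ := by
    rw [← a3, hEd, ← Real.exp_add]; ring_nf
  have a6 : Real.exp (-(2 * π * k * (1/2 - x))) = X * E⁻¹ := by
    rw [← a1, hX, ← Real.exp_add]; ring_nf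
  rw [Real.cosh_eq, Real.cosh_eq, Real.sinh_eq, a2, a3, a4, a5, a6, a1]
  have hd : E ^ 2 - 1 ≠ 0 := by nlinarith
  have hd1 : (E - E⁻¹) / 2 = (E ^ 2 - 1) / (2 * E) := by field_simp
  have hd2 : 1 - (E * E)⁻¹ = (E ^ 2 - 1) / E ^ 2 := by field_simp
  rw [← hEd, hd1, hd2]
  field_simp
  ring

lemma xi_formula (x k : ℝ) (h0 : 0 < x) (h1 : x < 1) (hk : 0 < k) :
    xiLayer (π * x) (-k ^ 2) = -k / (4 * π)
      - 1 / (8 * π ^ 2) * (imP x (2 * π * k) + imP (1 - x) (2 * π * k)) := by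
  set H : ℝ → ℝ := fun k => -(1 / π ^ 2) * (∑' n, logS (π * x) n k) + k / (4 * π)
    + 1 / (8 * π ^ 2) * (imP x (2 * π * k) + imP (1 - x) (2 * π * k)) with hH
  have hc : ContinuousOn H (Set.Icc 0 k) := by
    have c1 : Continuous (fun k => ∑' n, logS (π * x) n k) :=
      continuous_iff_continuousAt.2 fun y => (logS_deriv (π * x) y).continuousAt
    have m : Set.MapsTo (fun y : ℝ => 2 * π * y) (Set.Icc 0 k) (Set.Ici 0) := fun y hy => by
      have := hy.1
      show 0 ≤ 2 * π * y
      positivity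
    have c2 : ContinuousOn (fun y : ℝ => imP x (2 * π * y)) (Set.Icc 0 k) :=
      (imP_cont x h0 h1).comp (by fun_prop) m
    have c3 : ContinuousOn (fun y : ℝ => imP (1 - x) (2 * π * y)) (Set.Icc 0 k) :=
      (imP_cont (1 - x) (by linarith) (by linarith)).comp (by fun_prop) m
    have c1' := c1.continuousOn (s := Set.Icc 0 k)
    exact ((c1'.const_mul _).add (by fun_prop)).add ((c2.add c3).const_mul _)
  have hd : ∀ y ∈ Set.Ioo 0 k, HasDerivAt H 0 y := by
    intro y hy
    have hy0 : 0 < y := hy.1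
    have l : HasDerivAt (fun y : ℝ => 2 * π * y) (2 * π) y := by
      simpa using (hasDerivAt_id y).const_mul (2 * π)
    have d2 := (imP_deriv x h0 h1 (2 * π * y) (by positivity)).comp y l
    have d3 := (imP_deriv (1 - x) (by linarith) (by linarith) (2 * π * y) (by positivity)).comp y l
    have d1 := (logS_deriv' x y h0 h1 hy0).const_mul (-(1 / π ^ 2))
    have := (d1.add ((hasDerivAt_id y).div_const (4 * π))).add ((d2.add d3).const_mul (1 / (8 * π ^ 2)))
    rw [alg_zero x y hy0] at this
    exact this
  obtain ⟨y, hy, hs⟩ := exists_hasDerivAt_eq_slope H (fun _ => 0) hk hc hd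
  have hHk : H k = H 0 := by
    rw [eq_comm, div_eq_zero_iff] at hs
    rcases hs with h | h <;> linarith
  have hH0 : H 0 = 1 / (8 * π ^ 2) * (imP x 0 + imP (1 - x) 0) := by
    simp [hH, logS]
  have hr := digamma_refl x h0 h1
  rw [hH0, imP_zero x h0 h1, imP_zero (1 - x) (by linarith) (by linarith)] at hHk
  have hxi : xiLayer (π * x) (-k ^ 2) = -(1 / π ^ 2) * (∑' n, logS (π * x) n k)
      + (1 / (4 * π ^ 2)) *
      (Real.eulerMascheroniConstant + digamma x + (π / 2) * Real.cot (π * x)) := by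
    have e : ∀ n : ℕ, 1 - -k ^ 2 / ((n : ℝ) + 1) ^ 2 = 1 + k ^ 2 / ((n : ℝ) + 1) ^ 2 := fun n => by ring
    simp only [xiLayer, logS, e]
    rw [mul_div_cancel_left₀ _ pi_ne_zero]
  rw [hxi]
  simp only [hH] at hHk
  have e2 : π / 2 * Real.cot (π * x) = (digamma (1 - x) - digamma x) / 2 := by rw [hr]; ring
  rw [e2]
  have e3 : 1 / (4 * π ^ 2) *
      (Real.eulerMascheroniConstant + digamma x + (digamma (1 - x) - digamma x) / 2)
      = -(1 / (8 * π ^ 2) * (-Real.eulerMascheroniConstant - digamma x +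
        (-Real.eulerMascheroniConstant - digamma (1 - x)))) := by
    field_simp; ring
  rw [e3, ← hHk]
  ring

set_option maxHeartbeats 4000000

/-- Strong-coupling asymptotics of the bound-state energy: if `ε(α)` denotes the unique
`z < 1` with `ξ(b,z) = α`, then for every `0 < c < π/2 − |b − π/2|` there are `C > 0`
and `α₀ < 0` with `|ε(α) + 16π²α²| ≤ C·e^{cα}` for all `α ≤ α₀`; moreover
`ε(α) ≥ −16π²α²` for all `α < 0`. -/
theorem eigenvalue_strong_coupling_asymptotics (b c : ℝ) (hb0 : 0 < b) (hbπ : b < π)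
    (hc0 : 0 < c) (hc : c < π / 2 - |b - π / 2|)
    (ε : ℝ → ℝ) (hε : ∀ α : ℝ, ε α < 1 ∧ xiLayer b (ε α) = α) :
    (∃ C : ℝ, 0 < C ∧ ∃ α₀ : ℝ, α₀ < 0 ∧ ∀ α : ℝ, α ≤ α₀ →
        |ε α + 16 * π ^ 2 * α ^ 2| ≤ C * Real.exp (c * α)) ∧
    (∀ α : ℝ, α < 0 → -(16 * π ^ 2 * α ^ 2) ≤ ε α) := by
  obtain ⟨x, rfl⟩ : ∃ x, b = π * x := ⟨b / π, by field_simp⟩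
  have hx0 : 0 < x := by nlinarith [pi_pos]
  have hx1 : x < 1 := by nlinarith [pi_pos]
  have hcx : c ≤ π * x := by linarith [neg_abs_le (π * x - π / 2)]
  have hcx' : c ≤ π * (1 - x) := by linarith [le_abs_self (π * x - π / 2)]
  have hπ := pi_gt_three
  set R : ℝ → ℝ := fun k => 1 / (8 * π ^ 2) * (imP x (2 * π * k) + imP (1 - x) (2 * π * k)) with hR
  have hR0 : ∀ k, 0 < k → 0 ≤ R k := by
    intro k hk
    have := imP_nonneg x hx0 hx1 (2 * π * k) (by positivity)
    have := imP_nonneg (1 - x) (by linarith) (by linarith) (2 * π * k) (by positivity)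
    simp only [hR]
    positivity
  -- negative energies
  have hneg : ∀ α, ε α < 0 → ∃ k, 0 < k ∧ ε α = -k ^ 2 ∧ α = -k / (4 * π) - R k := by
    intro α h
    refine ⟨Real.sqrt (-ε α), Real.sqrt_pos.2 (by linarith), ?_, ?_⟩
    · rw [Real.sq_sqrt (by linarith)]; ring
    · have := xi_formula x (Real.sqrt (-ε α)) hx0 hx1 (Real.sqrt_pos.2 (by linarith))
      rw [Real.sq_sqrt (by linarith), neg_neg, (hε α).2] at this
      exact this
  have hval : ∀ k, (4 * π * (-k / (4 * π) - R k)) = -(k + 4 * π * R k) := by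
    intro k; field_simp; ring
  refine ⟨?_, ?_⟩
  · -- constants
    set q : ℝ := (1 - Real.exp (-1))⁻¹ with hq
    have hq0 : 0 < q := inv_pos.2 (by linarith [exp_lt_one_of_neg' (by norm_num : (-1:ℝ) < 0)])
    have hx1' : 0 < 1 - x := by linarith
    set A : ℝ := 1 / (8 * π ^ 2) * (1 / x * q + 1 / (1 - x) * q) with hA
    have hA0 : 0 < A := by positivity
    have hRA : ∀ k, 1 ≤ k → R k ≤ A * Real.exp (-2 * c * k) := by
      intro k hk
      have i1 := imP_le x hx0 hx1 (2 * π * k) (by nlinarith)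
      have i2 := imP_le (1 - x) hx1' (by linarith) (2 * π * k) (by nlinarith)
      have j1 : Real.exp (-(2 * π * k) * x) ≤ Real.exp (-2 * c * k) :=
        Real.exp_le_exp.2 (by nlinarith)
      have j2 : Real.exp (-(2 * π * k) * (1 - x)) ≤ Real.exp (-2 * c * k) :=
        Real.exp_le_exp.2 (by nlinarith)
      have m1 := i1.trans (mul_le_mul_of_nonneg_left j1 (by positivity))
      have m2 := i2.trans (mul_le_mul_of_nonneg_left j2 (by positivity))
      calc R k ≤ 1 / (8 * π ^ 2) * (1 / x * q * Real.exp (-2 * c * k)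
            + 1 / (1 - x) * q * Real.exp (-2 * c * k)) :=
            mul_le_mul_of_nonneg_left (add_le_add m1 m2) (by positivity)
        _ = _ := by rw [hA]; ring
    refine ⟨(8 * π * A / c + 16 * π ^ 2 * A ^ 2) * Real.exp (c * A), by positivity,
      min (-1) (xiLayer (π * x) (-1) - 1), by linarith [min_le_left (-1) (xiLayer (π * x) (-1) - 1)], ?_⟩
    intro α hα
    have hα2 : α ≤ xiLayer (π * x) (-1) - 1 := hα.trans (min_le_right _ _)
    have hlt : ε α < -1 := by
      by_contra hcon
      have := sum_anti (π * x) (-1) (ε α) (not_lt.1 hcon) (hε α).1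
      have h3 : xiLayer (π * x) (-1) ≤ xiLayer (π * x) (ε α) := by
        unfold xiLayer
        have h4 : 0 ≤ 1 / π ^ 2 := by positivity
        have := mul_le_mul_of_nonneg_left this h4
        linarith
      rw [(hε α).2] at h3
      linarith
    obtain ⟨k, hk, hek, hak⟩ := hneg α (by linarith)
    have hk1 : 1 ≤ k := by nlinarith
    have hRk := hRA k hk1
    have hRk0 := hR0 k hk
    set e : ℝ := Real.exp (-c * k) with he
    have he0 : 0 < e := Real.exp_pos _
    have he1 : e ≤ 1 := by
      rw [he, Real.exp_le_one_iff]; nlinarith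
    have hee : Real.exp (-2 * c * k) = e * e := by rw [he, ← Real.exp_add]; ring_nf
    have hke : c * k * e ≤ 1 := by
      have := Real.add_one_le_exp (c * k)
      have h5 : Real.exp (c * k) * e = 1 := by rw [he, ← Real.exp_add]; ring_nf; simp
      nlinarith
    rw [hee] at hRk
    have hRA' : R k ≤ A := by
      have : e * e ≤ 1 := by nlinarith
      nlinarith
    have hsq : 16 * π ^ 2 * α ^ 2 = (k + 4 * π * R k) ^ 2 := by
      have := hval k
      rw [← hak] at this
      calc 16 * π ^ 2 * α ^ 2 = (4 * π * α) ^ 2 := by ring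
        _ = _ := by rw [this]; ring
    have hdiff : ε α + 16 * π ^ 2 * α ^ 2 = 8 * π * (k * R k) + 16 * π ^ 2 * (R k) ^ 2 := by
      rw [hsq, hek]; ring
    rw [hdiff, abs_of_nonneg (by positivity)]
    have hkR : k * R k ≤ A / c * e := by
      calc k * R k ≤ k * (A * (e * e)) := mul_le_mul_of_nonneg_left hRk hk.le
        _ = A / c * e * (c * k * e) := by field_simp
        _ ≤ A / c * e * 1 := mul_le_mul_of_nonneg_left hke (by positivity)
        _ = _ := by ring
    have hRR : (R k) ^ 2 ≤ A ^ 2 * e := by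
      have : e * e ≤ e := by nlinarith
      calc (R k) ^ 2 = R k * R k := by ring
        _ ≤ A * (A * (e * e)) := mul_le_mul hRA' hRk hRk0 hA0.le
        _ = A ^ 2 * (e * e) := by ring
        _ ≤ A ^ 2 * e := by gcongr
    have hexp : e ≤ Real.exp (c * A) * Real.exp (c * α) := by
      rw [he, ← Real.exp_add]
      apply Real.exp_le_exp.2
      have h6 : k / (4 * π) ≤ k := div_le_self hk.le (by linarith)
      have h7 : -k ≤ A + α := by rw [hak, neg_div]; linarith
      nlinarith
    calc 8 * π * (k * R k) + 16 * π ^ 2 * (R k) ^ 2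
        ≤ 8 * π * (A / c * e) + 16 * π ^ 2 * (A ^ 2 * e) := by gcongr
      _ = (8 * π * A / c + 16 * π ^ 2 * A ^ 2) * e := by ring
      _ ≤ (8 * π * A / c + 16 * π ^ 2 * A ^ 2) * (Real.exp (c * A) * Real.exp (c * α)) := by gcongr
      _ = _ := by ring
  · intro α hα
    by_cases h : ε α < 0
    · obtain ⟨k, hk, hek, hak⟩ := hneg α h
      have hsq : 16 * π ^ 2 * α ^ 2 = (k + 4 * π * R k) ^ 2 := by
        have := hval k
        rw [← hak] at this
        calc 16 * π ^ 2 * α ^ 2 = (4 * π * α) ^ 2 := by ring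
          _ = _ := by rw [this]; ring
      have hRk0 := hR0 k hk
      have : 0 ≤ 4 * π * R k := by positivity
      rw [hsq, hek]
      nlinarith
    · have : 0 ≤ 16 * π ^ 2 * α ^ 2 := by positivity
      linarith
end
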